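/- Let A be a σ-unital algebraically simple C*-algebra with strict comparison and surjective canonical map Γ, which is not purely infinite. Suppose e ∈ Ped(A⊗K)_+ is a nonzero contraction. Then for any ε > 0 there exists a positive contraction e₀ ∈ Her(e) satisfying: (1) d_τ(e) − d_τ(e₀) < ε for all τ ∈ \overline{QT(A)}^w; and (2) there exists an increasing sequence (e_{0,n}) of positive contractions in Her(e₀) such that τ(e_{0,n}) increases to d_τ(e₀) for every τ ∈ \overline{QT(A)}^w and ω(e_{0,n}) < ε for all n ∈ ℕ. -/

import Mathlib

open scoped ENNReal
open Filter Topology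

noncomputable section

namespace Paper

/-! ### Generic definitions in a (non-unital) C*-algebra -/

variable (R : Type*) [NonUnitalCStarAlgebra R] [PartialOrder R] [StarOrderedRing R]

variable {R} in
/-- The hereditary C*-subalgebra generated by `b`, i.e. `closure (b R b)`. -/
def her (b : R) : Set R := closure {x : R | ∃ y : R, x = b * y * b}

/-- `I` is a (not necessarily closed) two-sided ideal of the subalgebra `B`. -/
def IsIdealIn (B I : Set R) : Prop :=
  I ⊆ B ∧ (0 : R) ∈ I ∧ (∀ x ∈ I, ∀ y ∈ I, x + y ∈ I) ∧ (∀ x ∈ I, -x ∈ I) ∧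
    (∀ x ∈ I, ∀ b ∈ B, x * b ∈ I ∧ b * x ∈ I)

variable {R} in
/-- The Pedersen ideal of the subalgebra `B`: the minimal dense two-sided ideal of `B`,
equivalently the intersection of all dense two-sided ideals of `B`. -/
def pedersenIn (B : Set R) : Set R :=
  ⋂ I ∈ {I : Set R | IsIdealIn R B I ∧ B ⊆ closure I}, I

/-- The Pedersen ideal of `R`. -/
def pedersen : Set R := pedersenIn (Set.univ : Set R)

variable {R} in
/-- Cuntz subequivalence `a ≲ b`. -/
def CuntzLE (a b : R) : Prop :=
  ∃ x : ℕ → R, Tendsto (fun n => ‖a - star (x n) * b * x n‖) atTop (𝓝 0)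

variable {R} in
/-- Cuntz subequivalence relative to a subset `B` (the `xₙ` are taken in `B`). -/
def CuntzLEIn (B : Set R) (a b : R) : Prop :=
  ∃ x : ℕ → R, (∀ n, x n ∈ B) ∧ Tendsto (fun n => ‖a - star (x n) * b * x n‖) atTop (𝓝 0)

variable {R} in
/-- Cuntz equivalence `a ∼ b`. -/
def CuntzEq (a b : R) : Prop := CuntzLE a b ∧ CuntzLE b a

/-- The cut-off function `f_ε`: `0` on `[0, ε/2]`, `1` on `[ε, ∞)`, linear in between. -/
def cutoff (ε : ℝ) : ℝ → ℝ := fun t => min 1 (max 0 (2 * t / ε - 1))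

variable {R} in
/-- `f_ε(a)`, via the (non-unital) continuous functional calculus. -/
def fEps (ε : ℝ) (a : R) : R := cfcₙ (cutoff ε) a

/-- A densely defined 2-quasitrace on `R` (recorded by its values on positive elements;
the value on non-positive elements is normalised to `0`). -/
structure QuasiTrace : Type _ where
  toFun : R → ℝ≥0∞
  zero_of_not_nonneg : ∀ a : R, ¬ (0 ≤ a) → toFun a = 0
  map_zero : toFun 0 = 0
  map_smul : ∀ (r : ℝ) (a : R), 0 < r → 0 ≤ a → toFun (r • a) = ENNReal.ofReal r * toFun a
  map_add_of_commute : ∀ a b : R, 0 ≤ a → 0 ≤ b → a * b = b * a →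
    toFun (a + b) = toFun a + toFun b
  map_star_mul_self : ∀ x : R, toFun (star x * x) = toFun (x * star x)
  lowerSemicontinuousOn : LowerSemicontinuousOn toFun {a : R | 0 ≤ a}
  finite_on_pedersen : ∀ a ∈ pedersen R, 0 ≤ a → toFun a < ∞
  exists_matrix_extension : ∃ σ : Matrix (Fin 2) (Fin 2) R → ℝ≥0∞,
    (∀ a : R, σ (fun i j => if i = 0 ∧ j = 0 then a else 0) = toFun a) ∧
    σ 0 = 0 ∧
    (∀ (r : ℝ) (x : Matrix (Fin 2) (Fin 2) R), 0 < r → (∃ y, x = star y * y) →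
      σ (r • x) = ENNReal.ofReal r * σ x) ∧
    (∀ x y : Matrix (Fin 2) (Fin 2) R, (∃ z, x = star z * z) → (∃ z, y = star z * z) →
      x * y = y * x → σ (x + y) = σ x + σ y) ∧
    (∀ x : Matrix (Fin 2) (Fin 2) R, σ (star x * x) = σ (x * star x))

/-- The topology of pointwise convergence on the Pedersen ideal. -/
instance : TopologicalSpace (QuasiTrace R) :=
  TopologicalSpace.induced (fun τ => fun a : pedersen R => τ.toFun a) inferInstance

variable {R}

/-- The zero quasitrace. -/
def QuasiTrace.IsZero (τ : QuasiTrace R) : Prop := ∀ a : R, τ.toFun a = 0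

/-- The dimension function `d_τ(a) = lim_{ε → 0} τ(f_ε(a))`. -/
def dTau (τ : QuasiTrace R) (a : R) : ℝ≥0∞ :=
  ⨆ n : ℕ, τ.toFun (fEps (1 / (n + 1)) a)

/-- `ω(a)` relative to a set `S` of quasitraces:
`lim_n sup {d_τ(a) - τ(f_{1/n}(a)) : τ ∈ S}`. -/
def omegaOn (S : Set (QuasiTrace R)) (a : R) : ℝ≥0∞ :=
  ⨅ n : ℕ, ⨆ τ ∈ S, (dTau τ a - τ.toFun (fEps (1 / (n + 1)) a))

/-- The seminorm `‖x‖_{2,S}`. -/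
def norm2On (S : Set (QuasiTrace R)) (x : R) : ℝ≥0∞ :=
  ⨆ τ ∈ S, (τ.toFun (star x * x)) ^ (1 / 2 : ℝ)

variable (R)

/-- `R` has (Blackadar's) strict comparison. -/
def StrictComparison : Prop :=
  ∀ a b : R, 0 ≤ a → 0 ≤ b →
    (∀ τ : QuasiTrace R, ¬ τ.IsZero → dTau τ a < dTau τ b) → CuntzLE a b

/-- `R` is a simple C*-algebra: it is nonzero and has no nontrivial closed two-sided ideals. -/
def IsSimpleCStar : Prop :=
  (∃ x : R, x ≠ 0) ∧
    ∀ I : TwoSidedIdeal R, IsClosed (I : Set R) → (I : Set R) = {0} ∨ (I : Set R) = Set.univ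

/-- `R` is σ-unital: it contains a strictly positive element `h`
(equivalently, `Her(h) = R`). -/
def SigmaUnital : Prop := ∃ h : R, 0 ≤ h ∧ her h = Set.univ

/-- `R` is elementary: isomorphic to the algebra of compact operators on some Hilbert space. -/
def IsElementary : Prop :=
  ∃ (H : Type) (_ : NormedAddCommGroup H) (_ : InnerProductSpace ℂ H) (_ : CompleteSpace H)
    (φ : R →⋆ₙₐ[ℂ] (H →L[ℂ] H)), Function.Injective φ ∧
      Set.range φ = {T : H →L[ℂ] H | IsCompactOperator (⇑T)}

/-- `R` is purely infinite: `R ≇ ℂ` and `b ≲ a` for all nonzero positive `a, b`. -/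
def PurelyInfinite : Prop :=
  (¬ ∃ φ : R →⋆ₙₐ[ℂ] ℂ, Function.Bijective φ) ∧
    ∀ a b : R, 0 ≤ a → 0 ≤ b → a ≠ 0 → b ≠ 0 → CuntzLE b a

/-- `R` is finite: its minimal unitization contains no non-unitary isometry. -/
def IsFiniteCStar : Prop :=
  ∀ v : Unitization ℂ R, star v * v = 1 → v * star v = 1

/-- `R` has stable rank one: the invertible elements are dense in the minimal unitization. -/
def StableRankOne : Prop := Dense {x : Unitization ℂ R | IsUnit x}

variable {R}

/-- `c` represents `n·[a]` in the Cuntz semigroup: it is the sum of `n` mutually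
orthogonal positive elements, each Cuntz equivalent to `a`. -/
def IsNFoldRep (n : ℕ) (a c : R) : Prop :=
  ∃ f : Fin n → R, (∀ i, 0 ≤ f i) ∧ (∀ i, CuntzEq (f i) a) ∧
    (∀ i j, i ≠ j → f i * f j = 0) ∧ c = ∑ i, f i

/-- `s` represents the supremum of the increasing sequence of Cuntz classes `[y n]`. -/
def IsCuntzLUB (y : ℕ → R) (s : R) : Prop :=
  (∀ n, CuntzLE (y n) s) ∧ ∀ c : R, 0 ≤ c → (∀ n, CuntzLE (y n) c) → CuntzLE s c

/-- `[x] ≪ [y]` in the Cuntz semigroup. -/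
def CuntzWayBelow (x y : R) : Prop :=
  ∀ yseq : ℕ → R, (∀ n, 0 ≤ yseq n) → (∀ n, CuntzLE (yseq n) (yseq (n + 1))) →
    ∀ s : R, 0 ≤ s → IsCuntzLUB yseq s → CuntzLE y s → ∃ n₀, CuntzLE x (yseq n₀)

variable (R)

/-- The Cuntz semigroup of `R` is almost unperforated. -/
def AlmostUnperforated : Prop :=
  ∀ (a b : R) (k : ℕ), 1 ≤ k → 0 ≤ a → 0 ≤ b →
    (∃ c d : R, IsNFoldRep (k + 1) a c ∧ IsNFoldRep k b d ∧ CuntzLE c d) → CuntzLE a b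

/-- The Cuntz semigroup of `R` is almost divisible. -/
def AlmostDivisible : Prop :=
  ∀ x y : R, 0 ≤ x → 0 ≤ y → CuntzWayBelow x y → ∀ n : ℕ, 1 ≤ n →
    ∃ z : R, 0 ≤ z ∧ (∃ c : R, IsNFoldRep n z c ∧ CuntzLE c y) ∧
      (∃ c : R, IsNFoldRep (n + 1) z c ∧ CuntzLE x c)

/-! ### The stabilization `W ≅ A ⊗ K` -/

variable (A W : Type*) [NonUnitalCStarAlgebra A] [PartialOrder A] [StarOrderedRing A]
  [NonUnitalCStarAlgebra W] [PartialOrder W] [StarOrderedRing W]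

/-- A realization of `W` as the stabilization `A ⊗ K`: the maps `emb i j : a ↦ a ⊗ e_{ij}`
are isometric, satisfy the matrix-unit relations, and have dense joint linear span. -/
structure Stabilization : Type _ where
  emb : ℕ → ℕ → (A →ₗ[ℂ] W)
  emb_mul : ∀ (i j k l : ℕ) (a b : A),
    emb i j a * emb k l b = if j = k then emb i l (a * b) else 0
  emb_star : ∀ (i j : ℕ) (a : A), star (emb i j a) = emb j i (star a)
  norm_emb : ∀ (i j : ℕ) (a : A), ‖emb i j a‖ = ‖a‖
  dense_span : Dense (Submodule.span ℂ {w : W | ∃ (i j : ℕ) (a : A), w = emb i j a} : Set W)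

variable {A W}

/-- The set `QT(A)` of quasitraces normalized on `A ⊆ A ⊗ K`. -/
def QTSet (SB : Stabilization A W) : Set (QuasiTrace W) :=
  {τ | (⨆ a : {a : A // 0 ≤ a ∧ ‖a‖ ≤ 1}, τ.toFun (SB.emb 0 0 a)) = 1}

/-- The quasitraces normalized on the hereditary subalgebra `Her(c) ⊆ W`. -/
def QTSetHer (c : W) : Set (QuasiTrace W) :=
  {τ : QuasiTrace W |
    (⨆ a : {a : W // a ∈ her c ∧ 0 ≤ a ∧ ‖a‖ ≤ 1}, τ.toFun a) = 1}

/-- `ω(a) = 0` for `a ∈ W = A ⊗ K`, computed relative to `\overline{QT(Her(e))}^w`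
for any nonzero `e ∈ Ped(A)₊`. -/
def OmegaZero (SB : Stabilization A W) (a : W) : Prop :=
  ∀ e : A, 0 ≤ e → e ≠ 0 → e ∈ pedersen A →
    omegaOn (closure (QTSetHer (SB.emb 0 0 e))) a = 0

/-- `A` has tracial approximate oscillation zero. -/
def TAOZ (SB : Stabilization A W) : Prop :=
  ∀ e : A, 0 ≤ e → e ≠ 0 → e ∈ pedersen A →
    ∀ a : W, 0 ≤ a → a ∈ pedersen W →
      ∃ b : ℕ → W, (∀ n, 0 ≤ b n) ∧ (∀ n, ‖b n‖ ≤ 1) ∧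
        (∀ n, b n ∈ pedersenIn (her a)) ∧
        Tendsto (fun n => omegaOn (closure (QTSetHer (SB.emb 0 0 e))) (b n)) atTop (𝓝 0) ∧
        Tendsto (fun n => norm2On (closure (QTSetHer (SB.emb 0 0 e))) (a - b n)) atTop (𝓝 0)

/-! ### Affine functions on the quasitrace cone and the map `Γ` -/

variable (W) in
/-- `ρ = t·τ + (1-t)·σ` as quasitraces. -/
def IsCombo (t : ℝ) (τ σ ρ : QuasiTrace W) : Prop :=
  ∀ a : W, 0 ≤ a →
    ρ.toFun a = ENNReal.ofReal t * τ.toFun a + ENNReal.ofReal (1 - t) * σ.toFun a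

variable (W) in
/-- `f` is affine on the quasitrace cone. -/
def IsAffineQT (f : QuasiTrace W → ℝ≥0∞) : Prop :=
  ∀ t : ℝ, 0 ≤ t → t ≤ 1 → ∀ τ σ ρ : QuasiTrace W, IsCombo W t τ σ ρ →
    f ρ = ENNReal.ofReal t * f τ + ENNReal.ofReal (1 - t) * f σ

variable (W) in
/-- Membership in `Aff₊(QT̃(A))`. -/
def MemAffPlus (f : QuasiTrace W → ℝ≥0∞) : Prop :=
  (∀ τ, f τ = 0) ∨
    (Continuous f ∧ IsAffineQT W f ∧ (∀ τ, f τ < ∞) ∧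
      (∀ τ : QuasiTrace W, ¬ τ.IsZero → 0 < f τ) ∧
      (∀ τ : QuasiTrace W, τ.IsZero → f τ = 0))

variable (W) in
/-- Membership in `LAff₊(QT̃(A))`. -/
def MemLAffPlus (f : QuasiTrace W → ℝ≥0∞) : Prop :=
  ∃ g : ℕ → QuasiTrace W → ℝ≥0∞, (∀ n, MemAffPlus W (g n)) ∧
    (∀ n τ, g n τ ≤ g (n + 1) τ) ∧ ∀ τ, f τ = ⨆ n, g n τ

variable (W) in
/-- The canonical map `Γ : Cu(A) → LAff₊(QT̃(A))`, `Γ([a])(τ) = d_τ(a)`, is surjective. -/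
def GammaSurjective : Prop :=
  ∀ f : QuasiTrace W → ℝ≥0∞, MemLAffPlus W f →
    ∃ a : W, 0 ≤ a ∧ ∀ τ : QuasiTrace W, dTau τ a = f τ

/-!
The point is to approximate a positive `c`, whose ranks `d_τ(c)` are bounded on a set `S` of
quasitraces, by elements whose rank drops only slightly under a cut-down, uniformly over `S`. Form
the staircase `z = ⨁_{k < N} (c - (k+1)δ)₊` and use surjectivity of `Γ` to find `x` with
`(N + 1) d_τ(x) = d_τ(z)`. Strict comparison gives `x ≲ c`, and also `z ≲ x ⊕ ⋯ ⊕ x` with `N + 2`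
summands, whence `d_τ((z - δ)₊) ≤ (N + 2) d_τ((x - s)₊)` for some `s > 0` independent of `τ`. Since
`(z - δ)₊` is the staircase with its steps shifted by one, its rank is at least `d_τ(z) - d_τ(c)`.
So for `N` large, `d_τ(x) - d_τ((x - s)₊)` is uniformly small on `S` and `d_τ(x)` almost dominates
`d_τ((c - (N+1)δ)₊)`. As `x ≲ c`, such an `x` may be taken in `Her(c)`.

If `f` is a local unit for such an `x`, then `(1 - f) c (1 - f)` is orthogonal to `x` and the
construction repeats inside it. This exhausts `e` up to a small rank by mutually orthogonal `P_k`
whose rank drops under cutting down by at most `η_k`, with `∑ η_k` small. Let `e₀` be the sum of the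
`P_k`, each replaced by a function of it that is constantly `4^{-(k+1)}` above the cut-down level.
Then `f_{4^{-(n+1)}}(e₀)` involves only finitely many `k`, is constant on the bulk of each `P_k`,
and so its oscillation is at most `∑ η_k`.
-/

/-! ### Functional calculus in one operator -/

section FunctionalCalculus

open scoped ContinuousMapZero

variable {B : Type*} [NonUnitalCStarAlgebra B]

lemma semiconjBy_cfcₙ {x a b : B} (ha : IsSelfAdjoint a) (hb : IsSelfAdjoint b)
    (h : SemiconjBy x a b) {f : ℝ → ℝ} (hf : Continuous f := by fun_prop)
    (hf0 : f 0 = 0 := by simp) : SemiconjBy x (cfcₙ f a) (cfcₙ f b) := by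
  set s : Set ℝ := quasispectrum ℝ a ∪ quasispectrum ℝ b
  have : CompactSpace s := isCompact_iff_compactSpace.mp <|
    (NonUnitalContinuousFunctionalCalculus.isCompact_quasispectrum a).union
      (NonUnitalContinuousFunctionalCalculus.isCompact_quasispectrum b)
  have : Fact ((0 : ℝ) ∈ s) := ⟨Or.inl (quasispectrum.zero_mem ℝ a)⟩
  have has : quasispectrum ℝ a ⊆ s := Set.subset_union_left
  have hbs : quasispectrum ℝ b ⊆ s := Set.subset_union_right
  have intertwines (g : C(s, ℝ)₀) :
      SemiconjBy x (cfcₙHomSuperset ha has g) (cfcₙHomSuperset hb hbs g) := by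
    induction g using ContinuousMapZero.induction_on_of_compact with
    | zero => simp only [map_zero, SemiconjBy.zero_right]
    | id => simpa only [cfcₙHomSuperset_id] using h
    | star_id => simpa only [star_trivial, cfcₙHomSuperset_id] using h
    | add f g hf hg => simpa only [map_add] using hf.add_right hg
    | mul f g hf hg => simpa only [map_mul] using hf.mul_right hg
    | smul r f hf =>
      simpa only [SemiconjBy, map_smul, mul_smul_comm, smul_mul_assoc] using congrArg (r • ·) hf.eq
    | frequently f hf =>
      exact (isClosed_eq ((cfcₙHomSuperset_continuous ha has).const_mul x)
        ((cfcₙHomSuperset_continuous hb hbs).mul_const x)).closure_subset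
          (mem_closure_iff_frequently.mpr hf)
  rw [cfcₙ_apply f a, cfcₙ_apply f b]
  have h_f := intertwines ⟨⟨_, hf.continuousOn.domRestrict⟩, hf0⟩
  rw [cfcₙHomSuperset_apply, cfcₙHomSuperset_apply] at h_f
  exact h_f

lemma mul_cfcₙ_eq_zero {x a : B} (ha : IsSelfAdjoint a) (h : x * a = 0) {f : ℝ → ℝ}
    (hf : Continuous f := by fun_prop) (hf0 : f 0 = 0 := by simp) : x * cfcₙ f a = 0 := by
  simpa using (semiconjBy_cfcₙ ha (.zero B) (by simpa [SemiconjBy] using h) hf hf0).eq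

lemma cfcₙ_mul_eq_zero {x a : B} (ha : IsSelfAdjoint a) (h : a * x = 0) {f : ℝ → ℝ}
    (hf : Continuous f := by fun_prop) (hf0 : f 0 = 0 := by simp) : cfcₙ f a * x = 0 := by
  simpa using (semiconjBy_cfcₙ (.zero B) ha (by simpa [SemiconjBy] using h.symm) hf hf0).eq.symm

lemma cfcₙ_mul_cfcₙ_eq_zero {a b : B} (ha : IsSelfAdjoint a) (hb : IsSelfAdjoint b)
    (h : a * b = 0) {f g : ℝ → ℝ} (hf : Continuous f := by fun_prop) (hf0 : f 0 = 0 := by simp)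
    (hg : Continuous g := by fun_prop) (hg0 : g 0 = 0 := by simp) :
    cfcₙ f a * cfcₙ g b = 0 :=
  mul_cfcₙ_eq_zero hb (cfcₙ_mul_eq_zero ha h hf hf0) hg hg0

lemma mul_eq_zero_symm {a b : B} (ha : IsSelfAdjoint a) (hb : IsSelfAdjoint b)
    (h : a * b = 0) : b * a = 0 := by
  simpa [ha.star_eq, hb.star_eq] using congrArg star h

lemma cfcₙ_add_of_mul_eq_zero {a b : B} (ha : IsSelfAdjoint a) (hb : IsSelfAdjoint b)
    (h : a * b = 0) {f : ℝ → ℝ} (hf : Continuous f := by fun_prop)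
    (hf0 : f 0 = 0 := by simp) : cfcₙ f (a + b) = cfcₙ f a + cfcₙ f b := by
  have hba := mul_eq_zero_symm ha hb h
  set d := cfcₙ f (a + b) - (cfcₙ f a + cfcₙ f b) with hd
  have had : a * d = 0 := by
    have h₁ := (semiconjBy_cfcₙ (x := a) (ha.add hb) ha
      (by simp [SemiconjBy, mul_add, h]) hf hf0).eq
    have h₂ := (semiconjBy_cfcₙ ha ha rfl hf hf0).eq
    simp [hd, mul_sub, mul_add, h₁, h₂, mul_cfcₙ_eq_zero hb h hf hf0]
  have hbd : b * d = 0 := by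
    have h₁ := (semiconjBy_cfcₙ (x := b) (ha.add hb) hb
      (by simp [SemiconjBy, mul_add, hba]) hf hf0).eq
    have h₂ := (semiconjBy_cfcₙ hb hb rfl hf hf0).eq
    simp [hd, mul_sub, mul_add, h₁, h₂, mul_cfcₙ_eq_zero ha hba hf hf0]
  have hdd : d * d = 0 := by
    nth_rewrite 1 [hd]
    rw [sub_mul, add_mul, cfcₙ_mul_eq_zero ha had hf hf0, cfcₙ_mul_eq_zero hb hbd hf hf0,
      cfcₙ_mul_eq_zero (ha.add hb) (by rw [add_mul, had, hbd, add_zero]) hf hf0, add_zero, sub_zero]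
  have hd_sa : IsSelfAdjoint d := .sub .cfcₙ (.add .cfcₙ .cfcₙ)
  have : d = 0 := (CStarRing.star_mul_self_eq_zero_iff d).mp (by rw [hd_sa.star_eq, hdd])
  exact sub_eq_zero.mp this

lemma cfcₙ_sum_of_pairwise_mul_eq_zero {ι : Type*} {s : Finset ι} {a : ι → B}
    (ha : ∀ i ∈ s, IsSelfAdjoint (a i))
    (h : (s : Set ι).Pairwise fun i j => a i * a j = 0) {f : ℝ → ℝ}
    (hf : Continuous f := by fun_prop) (hf0 : f 0 = 0 := by simp) :
    cfcₙ f (∑ i ∈ s, a i) = ∑ i ∈ s, cfcₙ f (a i) := by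
  classical
  induction s using Finset.induction_on with
  | empty => simp
  | insert i s hi ih =>
    have ha' : ∀ j ∈ s, IsSelfAdjoint (a j) := fun j hj => ha j (Finset.mem_insert_of_mem hj)
    have hsum : a i * ∑ j ∈ s, a j = 0 := by
      rw [Finset.mul_sum]
      exact Finset.sum_eq_zero fun j hj =>
        h (by simp) (by simp [hj]) (ne_of_mem_of_not_mem hj hi).symm
    rw [Finset.sum_insert hi, Finset.sum_insert hi,
      cfcₙ_add_of_mul_eq_zero (ha i (by simp)) (isSelfAdjoint_sum s ha') hsum hf hf0,
      ih ha' (h.mono (by simp))]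

lemma self_mul_cfcₙ {a : B} (ha : IsSelfAdjoint a) {f : ℝ → ℝ}
    (hf : Continuous f := by fun_prop) (hf0 : f 0 = 0 := by simp) :
    a * cfcₙ f a = cfcₙ (fun x => x * f x) a := by
  rw [cfcₙ_mul (fun x : ℝ => x) f a, cfcₙ_id' ℝ a]

lemma cfcₙ_mul_self {a : B} (ha : IsSelfAdjoint a) {f : ℝ → ℝ}
    (hf : Continuous f := by fun_prop) (hf0 : f 0 = 0 := by simp) :
    cfcₙ f a * a = cfcₙ (fun x => f x * x) a := by
  rw [cfcₙ_mul f (fun x : ℝ => x) a, cfcₙ_id' ℝ a]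

lemma cfcₙ_mul_self_mul_cfcₙ {a : B} (ha : IsSelfAdjoint a) {f : ℝ → ℝ}
    (hf : Continuous f := by fun_prop) (hf0 : f 0 = 0 := by simp) :
    cfcₙ f a * a * cfcₙ f a = cfcₙ (fun x => f x * x * f x) a := by
  rw [cfcₙ_mul_self ha hf hf0, cfcₙ_mul (fun x => f x * x) f a]

end FunctionalCalculus

section PositiveFunctionalCalculus

variable {a : W} {f g h : ℝ → ℝ}

lemma cfcₙ_nonneg_of_nonneg (ha : 0 ≤ a) (hf : ∀ x, 0 ≤ x → 0 ≤ f x) : 0 ≤ cfcₙ f a :=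
  cfcₙ_nonneg fun x hx => hf x (quasispectrum_nonneg_of_nonneg a ha x hx)

lemma cfcₙ_le_cfcₙ (ha : 0 ≤ a) (hfg : ∀ x, 0 ≤ x → f x ≤ g x)
    (hf : Continuous f := by fun_prop) (hf0 : f 0 = 0 := by simp)
    (hg : Continuous g := by fun_prop) (hg0 : g 0 = 0 := by simp) : cfcₙ f a ≤ cfcₙ g a :=
  cfcₙ_mono (fun x hx => hfg x (quasispectrum_nonneg_of_nonneg a ha x hx))

lemma cfcₙ_congr_of_nonneg (ha : 0 ≤ a) (hfg : ∀ x, 0 ≤ x → f x = g x) :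
    cfcₙ f a = cfcₙ g a :=
  cfcₙ_congr fun x hx => hfg x (quasispectrum_nonneg_of_nonneg a ha x hx)

lemma norm_cfcₙ_le_of_nonneg (ha : 0 ≤ a) {c : ℝ} (hf : ∀ x, 0 ≤ x → |f x| ≤ c) :
    ‖cfcₙ f a‖ ≤ c :=
  norm_cfcₙ_le fun x hx => hf x (quasispectrum_nonneg_of_nonneg a ha x hx)

lemma cfcₙ_mul_cfcₙ (ha : 0 ≤ a) (hfgh : ∀ x, 0 ≤ x → f x * g x = h x)
    (hf : Continuous f := by fun_prop) (hf0 : f 0 = 0 := by simp)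
    (hg : Continuous g := by fun_prop) (hg0 : g 0 = 0 := by simp) :
    cfcₙ f a * cfcₙ g a = cfcₙ h a := by
  rw [← cfcₙ_mul f g a]
  exact cfcₙ_congr_of_nonneg ha hfgh

lemma cfcₙ_cfcₙ (ha : 0 ≤ a) (hgfh : ∀ x, 0 ≤ x → g (f x) = h x)
    (hf : Continuous f := by fun_prop) (hf0 : f 0 = 0 := by simp)
    (hg : Continuous g := by fun_prop) (hg0 : g 0 = 0 := by simp) :
    cfcₙ g (cfcₙ f a) = cfcₙ h a := by
  rw [← cfcₙ_comp g f a]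
  exact cfcₙ_congr_of_nonneg ha hgfh

lemma cfcₙ_eq_self_of_nonneg (ha : 0 ≤ a) (hf : ∀ x, 0 ≤ x → f x = x) : cfcₙ f a = a :=
  (cfcₙ_congr_of_nonneg ha hf).trans (cfcₙ_id' ℝ a)

lemma le_norm_of_mem_quasispectrum (ha : 0 ≤ a) {x : ℝ} (hx : x ∈ quasispectrum ℝ a) :
    x ≤ ‖a‖ :=
  (le_abs_self x).trans (NonUnitalIsometricContinuousFunctionalCalculus.norm_quasispectrum_le a hx)

lemma tendsto_cfcₙ {u : ℕ → W} (hu : ∀ n, 0 ≤ u n) (ha : 0 ≤ a) (hua : Tendsto u atTop (𝓝 a))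
    (hf : Continuous f := by fun_prop) (hf0 : f 0 = 0 := by simp) :
    Tendsto (fun n => cfcₙ f (u n)) atTop (𝓝 (cfcₙ f a)) := by
  have hspec (b : W) (hb : 0 ≤ b) (hb' : ‖b‖ ≤ ‖a‖ + 1) :
      quasispectrum ℝ b ⊆ Set.Icc 0 (‖a‖ + 1) := fun x hx =>
    ⟨quasispectrum_nonneg_of_nonneg b hb x hx, (le_norm_of_mem_quasispectrum hb hx).trans hb'⟩
  have hnorm : ∀ᶠ n in atTop, ‖u n‖ ≤ ‖a‖ + 1 :=
    (hua.norm.eventually_lt_const (lt_add_one ‖a‖)).mono fun _ => le_of_lt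
  exact hua.cfcₙ isCompact_Icc f (hnorm.mono fun n hn => hspec _ (hu n) hn)
    (.of_forall fun n => .of_nonneg (hu n)) (hspec a ha (by linarith)) (.of_nonneg ha)
    hf.continuousOn hf0

end PositiveFunctionalCalculus

section Cut

variable {B : Type*} [NonUnitalCStarAlgebra B]

/-- The cut-down `(a - t)₊` of a positive element `a` by a real number `t ≥ 0`. -/
def cut (t : ℝ) (a : B) : B := cfcₙ (fun x : ℝ => max (x - t) 0) a

lemma cut_mul_cut_eq_zero {a b : B} {s t : ℝ} (hs : 0 ≤ s) (ht : 0 ≤ t) (ha : IsSelfAdjoint a)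
    (hb : IsSelfAdjoint b) (h : a * b = 0) : cut s a * cut t b = 0 :=
  cfcₙ_mul_cfcₙ_eq_zero ha hb h (by fun_prop) (by simpa using hs) (by fun_prop) (by simpa using ht)

variable {a : W} {s t : ℝ}

lemma cut_nonneg (t : ℝ) (ha : 0 ≤ a) : 0 ≤ cut t a :=
  cfcₙ_nonneg_of_nonneg ha fun _ _ => le_max_right _ _

lemma cut_zero (ha : 0 ≤ a) : cut 0 a = a :=
  cfcₙ_eq_self_of_nonneg ha fun x hx => by rw [sub_zero, max_eq_left hx]

lemma norm_sub_cut_le (ht : 0 ≤ t) (ha : 0 ≤ a) : ‖a - cut t a‖ ≤ t := by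
  have h_eq : a - cut t a = cfcₙ (fun x : ℝ => x - max (x - t) 0) a := by
    rw [cfcₙ_sub (fun x : ℝ => x) (fun x => max (x - t) 0) a (hg0 := by simpa using ht),
      cfcₙ_id' ℝ a, cut]
  rw [h_eq]
  refine norm_cfcₙ_le_of_nonneg ha fun x hx => ?_
  rcases max_cases (x - t) 0 with h | h <;> rw [abs_le] <;> constructor <;> linarith

lemma cut_cut (hs : 0 ≤ s) (ht : 0 ≤ t) (ha : 0 ≤ a) : cut s (cut t a) = cut (s + t) a :=
  cfcₙ_cfcₙ ha (hf0 := by simpa using ht) (hg0 := by simpa using hs) fun x _ => by grind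

lemma tendsto_cut (ha : 0 ≤ a) :
    Tendsto (fun n : ℕ => cut (1 / ((n : ℝ) + 1)) a) atTop (𝓝 a) := by
  refine tendsto_iff_norm_sub_tendsto_zero.mpr <| squeeze_zero (fun _ => norm_nonneg _)
    (fun n => ?_) tendsto_one_div_add_atTop_nhds_zero_nat
  rw [norm_sub_rev]
  exact norm_sub_cut_le (by positivity) ha

end Cut

section Hereditary

variable {B : Type*} [NonUnitalCStarAlgebra B]

/-- The hereditary subalgebra `her b` as an additive subgroup, through which it inherits closure
under finite and infinite sums. -/
def herAddSubgroup (b : B) : AddSubgroup B :=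
  ((AddMonoidHom.mulRight b).comp (AddMonoidHom.mulLeft b)).range.topologicalClosure

lemma mem_herAddSubgroup {b x : B} : x ∈ herAddSubgroup b ↔ x ∈ her b := by
  simp only [herAddSubgroup, her, ← SetLike.mem_coe, AddSubgroup.topologicalClosure_coe,
    AddMonoidHom.coe_range, Set.range, AddMonoidHom.comp_apply, AddMonoidHom.coe_mulRight,
    AddMonoidHom.coe_mulLeft, eq_comm]

lemma sub_mem_her {b x y : B} (hx : x ∈ her b) (hy : y ∈ her b) : x - y ∈ her b :=
  mem_herAddSubgroup.mp <|
    sub_mem (mem_herAddSubgroup.mpr hx) (mem_herAddSubgroup.mpr hy)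

lemma mul_mul_mem_her {b x y : B} (hx : x ∈ her b) (hy : y ∈ her b) (w : B) :
    x * w * y ∈ her b := by
  refine map_mem_closure₂ (f := fun x y : B => x * w * y) (by fun_prop) hx hy ?_
  rintro _ ⟨p, rfl⟩ _ ⟨q, rfl⟩
  exact ⟨p * b * w * b * q, by noncomm_ring⟩

lemma mul_mem_her {b x y : B} (hx : x ∈ her b) (hy : y ∈ her b) : x * y ∈ her b := by
  refine map_mem_closure₂ (f := fun x y : B => x * y) (by fun_prop) hx hy ?_
  rintro _ ⟨p, rfl⟩ _ ⟨q, rfl⟩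
  exact ⟨p * b * b * q, by noncomm_ring⟩

lemma her_subset_her {b c : B} (hc : c ∈ her b) : her c ⊆ her b := by
  refine closure_minimal ?_ isClosed_closure
  rintro _ ⟨p, rfl⟩
  exact mul_mul_mem_her hc hc p

lemma mul_eq_zero_of_mem_her {p b x : B} (h : p * b = 0) (hx : x ∈ her b) : p * x = 0 := by
  have h_closed : IsClosed {x : B | p * x = 0} := isClosed_eq (by fun_prop) (by fun_prop)
  refine closure_minimal ?_ h_closed hx
  rintro _ ⟨q, rfl⟩
  change p * (b * q * b) = 0
  rw [← mul_assoc, ← mul_assoc, h, zero_mul, zero_mul]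

lemma mul_eq_self_of_mem_her {v b x : B} (h : v * b = b) (hx : x ∈ her b) : v * x = x := by
  have h_closed : IsClosed {x : B | v * x = x} := isClosed_eq (by fun_prop) (by fun_prop)
  refine closure_minimal ?_ h_closed hx
  rintro _ ⟨q, rfl⟩
  change v * (b * q * b) = b * q * b
  rw [← mul_assoc, ← mul_assoc, h]

lemma cfcₙ_cut_mem_her {a : W} (ha : 0 ≤ a) {t : ℝ} (ht : 0 < t) {f : ℝ → ℝ}
    (hf : Continuous f := by fun_prop) (hf0 : f 0 = 0 := by simp) :
    cfcₙ f (cut t a) ∈ her a := by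
  let ψ : ℝ → ℝ := fun x => f (max (x - t) 0) / max x t ^ 2
  have hψ : Continuous ψ := Continuous.div (by fun_prop) (by fun_prop)
    fun x => (pow_pos (lt_max_of_lt_right ht) 2).ne'
  have hψ0 : ψ 0 = 0 := by simp [ψ, ht.le, hf0]
  have ha' : IsSelfAdjoint a := .of_nonneg ha
  refine subset_closure ⟨cfcₙ ψ a, ?_⟩
  rw [self_mul_cfcₙ ha' hψ hψ0, cfcₙ_mul_self ha']
  refine cfcₙ_cfcₙ ha (hf0 := by simpa using ht.le) (hg0 := hf0) fun x _ => ?_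
  rcases le_total x t with h | h
  · simp [ψ, max_eq_right (sub_nonpos.mpr h), hf0]
  · have hx : x ≠ 0 := (ht.trans_le h).ne'
    simp only [ψ, max_eq_left h]
    field_simp

lemma cfcₙ_mem_her {a : W} (ha : 0 ≤ a) {f : ℝ → ℝ} (hf : Continuous f := by fun_prop)
    (hf0 : f 0 = 0 := by simp) : cfcₙ f a ∈ her a :=
  isClosed_closure.mem_of_tendsto
    (tendsto_cfcₙ (fun _ => cut_nonneg _ ha) ha (tendsto_cut ha) hf hf0)
    (.of_forall fun _ => cfcₙ_cut_mem_her ha (by positivity) hf hf0)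

lemma sqrt_mem_her {a : W} (ha : 0 ≤ a) : CFC.sqrt a ∈ her a :=
  CFC.sqrt_eq_real_sqrt a ▸ cfcₙ_mem_her ha

lemma self_mem_her {a : W} (ha : 0 ≤ a) : a ∈ her a := by
  simpa only [cfcₙ_id' ℝ a] using cfcₙ_mem_her ha (f := fun x => x)

end Hereditary

section Cutoff

@[fun_prop]
lemma continuous_cutoff (ε : ℝ) : Continuous (cutoff ε) := by unfold cutoff; fun_prop

@[simp]
lemma cutoff_zero (ε : ℝ) : cutoff ε 0 = 0 := by simp [cutoff]

lemma cutoff_nonneg (ε x : ℝ) : 0 ≤ cutoff ε x := le_min zero_le_one (le_max_left _ _)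

lemma cutoff_le_one (ε x : ℝ) : cutoff ε x ≤ 1 := min_le_left _ _

lemma cutoff_of_le {ε x : ℝ} (hε : 0 < ε) (h : ε ≤ x) : cutoff ε x = 1 := by
  refine min_eq_left (le_max_of_le_right ?_)
  rw [mul_div_assoc]
  linarith [(one_le_div hε).mpr h]

lemma cutoff_of_le_half {ε x : ℝ} (hε : 0 < ε) (h : x ≤ ε / 2) : cutoff ε x = 0 := by
  rw [cutoff, max_eq_left, min_eq_right zero_le_one]
  linarith [(div_le_one hε).mpr (by linarith : 2 * x ≤ ε)]

lemma cutoff_antitone {δ ε x : ℝ} (hδ : 0 < δ) (h : δ ≤ ε) (hx : 0 ≤ x) :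
    cutoff ε x ≤ cutoff δ x := by
  unfold cutoff
  gcongr

lemma monotone_cutoff {ε : ℝ} (hε : 0 < ε) : Monotone (cutoff ε) := fun x y h => by
  unfold cutoff
  gcongr

variable {a : W}

lemma fEps_nonneg (δ : ℝ) (ha : 0 ≤ a) : 0 ≤ fEps δ a :=
  cfcₙ_nonneg_of_nonneg ha fun x _ => cutoff_nonneg δ x

lemma fEps_le_fEps {δ ε : ℝ} (ha : 0 ≤ a) (hδ : 0 < δ) (h : δ ≤ ε) : fEps ε a ≤ fEps δ a :=
  cfcₙ_le_cfcₙ ha fun _ hx => cutoff_antitone hδ h hx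

lemma norm_fEps_le_one (δ : ℝ) (ha : 0 ≤ a) : ‖fEps δ a‖ ≤ 1 :=
  norm_cfcₙ_le_of_nonneg ha fun x _ => by
    rw [abs_of_nonneg (cutoff_nonneg δ x)]
    exact cutoff_le_one δ x

lemma fEps_mem_her (δ : ℝ) (ha : 0 ≤ a) : fEps δ a ∈ her a := cfcₙ_mem_her ha

lemma fEps_cut (δ : ℝ) {t : ℝ} (ht : 0 ≤ t) (ha : 0 ≤ a) :
    fEps δ (cut t a) = cfcₙ (fun x => cutoff δ (max (x - t) 0)) a :=
  cfcₙ_cfcₙ ha (fun _ _ => rfl) (hf0 := by simpa using ht)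

end Cutoff

section Comparison

lemma isSelfAdjoint_sqrt (a : W) : IsSelfAdjoint (CFC.sqrt a) := .of_nonneg (CFC.sqrt_nonneg a)

lemma star_sqrt_sub_mul_self {a u : W} (ha : 0 ≤ a) (hu : IsSelfAdjoint u) :
    star (CFC.sqrt a - CFC.sqrt a * u) * (CFC.sqrt a - CFC.sqrt a * u) =
      a - u * a - a * u + u * a * u := by
  rw [star_sub, star_mul, (isSelfAdjoint_sqrt a).star_eq, hu.star_eq]
  nth_rewrite 5 6 7 8 [← CFC.sqrt_mul_sqrt_self a]
  noncomm_ring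

lemma norm_sqrt_sub_mul_sq_le {a b u : W} (ha : 0 ≤ a) (hb : 0 ≤ b) (hu : IsSelfAdjoint u) {C : ℝ}
    (hC : 0 ≤ C) (h : a ≤ C • b) :
    ‖CFC.sqrt a - CFC.sqrt a * u‖ ^ 2 ≤ C * ‖CFC.sqrt b - CFC.sqrt b * u‖ ^ 2 := by
  have h_nonneg {c : W} (hc : 0 ≤ c) : 0 ≤ c - u * c - c * u + u * c * u :=
    star_sqrt_sub_mul_self hc hu ▸ star_mul_self_nonneg _
  have h_le : a - u * a - a * u + u * a * u ≤ C • (b - u * b - b * u + u * b * u) := by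
    rw [← sub_nonneg]
    convert h_nonneg (sub_nonneg.mpr h) using 1
    simp only [smul_add, smul_sub, mul_sub, sub_mul, mul_smul_comm, smul_mul_assoc]
    abel
  have h_norm := CStarAlgebra.norm_le_norm_of_nonneg_of_le (h_nonneg ha) h_le
  rwa [← star_sqrt_sub_mul_self ha hu, ← star_sqrt_sub_mul_self hb hu, norm_smul,
    CStarRing.norm_star_mul_self, CStarRing.norm_star_mul_self, Real.norm_of_nonneg hC,
    ← sq, ← sq] at h_norm

lemma norm_sqrt_sub_sqrt_mul_fEps_le {b : W} (hb : 0 ≤ b) {δ : ℝ} (hδ : 0 < δ) :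
    ‖CFC.sqrt b - CFC.sqrt b * fEps δ b‖ ≤ √δ := by
  have h_eq : CFC.sqrt b - CFC.sqrt b * fEps δ b = cfcₙ (fun x => √x - √x * cutoff δ x) b := by
    rw [cfcₙ_sub Real.sqrt (fun x => √x * cutoff δ x) b, cfcₙ_mul Real.sqrt (cutoff δ) b,
      CFC.sqrt_eq_real_sqrt b, fEps]
  rw [h_eq]
  refine norm_cfcₙ_le_of_nonneg hb fun x _ => ?_
  have h0 := cutoff_nonneg δ x
  have h1 := cutoff_le_one δ x
  rcases le_total δ x with h | h
  · simp [cutoff_of_le hδ h]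
  · rw [abs_of_nonneg (by nlinarith [Real.sqrt_nonneg x])]
    nlinarith [Real.sqrt_le_sqrt h, Real.sqrt_nonneg x]

lemma exists_mul_sqrt_eq_fEps {b : W} (hb : 0 ≤ b) {δ : ℝ} (hδ : 0 < δ) :
    ∃ g : W, IsSelfAdjoint g ∧ g * CFC.sqrt b = fEps δ b ∧ CFC.sqrt b * g = fEps δ b := by
  have h_pos (x : ℝ) : 0 < √(max x (δ / 2)) := Real.sqrt_pos.mpr (lt_max_of_lt_right (by linarith))
  let γ : ℝ → ℝ := fun x => cutoff δ x / √(max x (δ / 2))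
  have hγ : Continuous γ := Continuous.div (by fun_prop) (by fun_prop) fun x => (h_pos x).ne'
  have hγ0 : γ 0 = 0 := by simp [γ]
  have hγ_mul (x : ℝ) : γ x * √x = cutoff δ x := by
    rcases le_total x (δ / 2) with h | h
    · simp [γ, cutoff_of_le_half hδ h]
    · have := (h_pos x).ne'
      simp only [γ, max_eq_left h] at this ⊢
      field_simp
  refine ⟨cfcₙ γ b, .cfcₙ, ?_⟩
  rw [CFC.sqrt_eq_real_sqrt b]
  exact ⟨cfcₙ_mul_cfcₙ hb (fun x _ => hγ_mul x) (hf0 := hγ0),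
    cfcₙ_mul_cfcₙ hb (fun x _ => (mul_comm _ _).trans (hγ_mul x)) (hg0 := hγ0)⟩

lemma cuntzLE_of_forall_norm_le {B : Type*} [NonUnitalCStarAlgebra B] {a b : B} {C : ℝ}
    (h : ∀ δ : ℝ, 0 < δ → ∃ x : B, ‖a - star x * b * x‖ ≤ C * √δ) : CuntzLE a b := by
  choose! x hx using h
  refine ⟨fun n => x (1 / ((n : ℝ) + 1)), squeeze_zero (fun _ => norm_nonneg _)
    (fun n => hx _ (by positivity)) ?_⟩
  simpa using ((Real.continuous_sqrt.tendsto 0).comp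
    tendsto_one_div_add_atTop_nhds_zero_nat).const_mul C

theorem cuntzLE_of_le_smul {a b : W} (ha : 0 ≤ a) (hb : 0 ≤ b) {C : ℝ} (hC : 0 ≤ C)
    (h : a ≤ C • b) : CuntzLE a b := by
  refine cuntzLE_of_forall_norm_le (C := 2 * ‖CFC.sqrt a‖ * √C) fun δ hδ => ?_
  obtain ⟨g, hg, hg_mul, hmul_g⟩ := exists_mul_sqrt_eq_fEps hb hδ
  set r := CFC.sqrt a
  set u := fEps δ b
  have hr : star r = r := (isSelfAdjoint_sqrt a).star_eq
  have hu : IsSelfAdjoint u := .cfcₙ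
  have h_defect : ‖r - r * u‖ ≤ √C * √δ := by
    refine abs_le_of_sq_le_sq' ?_ (by positivity) |>.2
    calc ‖r - r * u‖ ^ 2 ≤ C * ‖CFC.sqrt b - CFC.sqrt b * u‖ ^ 2 :=
          norm_sqrt_sub_mul_sq_le ha hb hu hC h
      _ ≤ C * √δ ^ 2 := by gcongr; exact norm_sqrt_sub_sqrt_mul_fEps_le hb hδ
      _ = (√C * √δ) ^ 2 := by rw [mul_pow, Real.sq_sqrt hC]
  have h_conj : star (g * r) * b * (g * r) = r * u * (u * r) := by
    rw [star_mul, hg.star_eq, hr, ← CFC.sqrt_mul_sqrt_self b]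
    calc r * g * (CFC.sqrt b * CFC.sqrt b) * (g * r) =
          r * (g * CFC.sqrt b) * (CFC.sqrt b * g * r) := by noncomm_ring
      _ = r * u * (u * r) := by rw [hg_mul, hmul_g]
  have h_split : a - r * u * (u * r) = (r - r * u) * r + r * u * star (r - r * u) := by
    rw [star_sub, star_mul, hr, hu.star_eq, ← CFC.sqrt_mul_sqrt_self a]
    noncomm_ring
  refine ⟨g * r, ?_⟩
  rw [h_conj, h_split]
  calc ‖(r - r * u) * r + r * u * star (r - r * u)‖
      ≤ ‖r - r * u‖ * ‖r‖ + ‖r‖ * ‖u‖ * ‖star (r - r * u)‖ :=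
        norm_add_le_of_le (norm_mul_le _ _) (norm_mul_le_of_le (norm_mul_le _ _) le_rfl)
    _ ≤ √C * √δ * ‖r‖ + ‖r‖ * 1 * (√C * √δ) := by
        rw [norm_star]
        gcongr
        exact norm_fEps_le_one δ hb
    _ = 2 * ‖r‖ * √C * √δ := by ring

theorem exists_cut_le_conj {a b : W} (ha : 0 ≤ a) (hb : 0 ≤ b) {t : ℝ} (ht : ‖a - b‖ < t) :
    ∃ k : W, IsSelfAdjoint k ∧ cut t a ≤ k * b * k := by
  set r := ‖a - b‖
  have h_pos (x : ℝ) : 0 < max (x - r) (t - r) := lt_max_of_lt_right (sub_pos.mpr ht)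
  let φ : ℝ → ℝ := fun x => √(max (x - t) 0 / max (x - r) (t - r))
  have hφ : Continuous φ := Real.continuous_sqrt.comp
    (Continuous.div (by fun_prop) (by fun_prop) fun x => (h_pos x).ne')
  have hφ0 : φ 0 = 0 := by simp [φ, (norm_nonneg (a - b)).trans ht.le]
  have hφ_mul (x : ℝ) : φ x * x * φ x - r * (φ x * φ x) = max (x - t) 0 := by
    calc φ x * x * φ x - r * (φ x * φ x) = (x - r) * (φ x * φ x) := by ring
      _ = (x - r) * (max (x - t) 0 / max (x - r) (t - r)) := by
        rw [Real.mul_self_sqrt (div_nonneg (le_max_right _ _) (h_pos x).le)]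
      _ = max (x - t) 0 := by
        rcases le_total x t with h | h
        · simp [max_eq_right (sub_nonpos.mpr h)]
        · have : x - r ≠ 0 := (sub_pos.mpr (ht.trans_le h)).ne'
          rw [max_eq_left (sub_le_sub_right h r)]
          field_simp
  set k := cfcₙ φ a
  have hk : IsSelfAdjoint k := .cfcₙ
  refine ⟨k, hk, ?_⟩
  have h_cut : k * a * k - r • (k * k) = cut t a := by
    have h_sq : k * k = cfcₙ (fun x => φ x * φ x) a :=
      cfcₙ_mul_cfcₙ ha (fun _ _ => rfl) hφ hφ0 hφ hφ0
    have h_mid : k * a * k = cfcₙ (fun x => φ x * x * φ x) a :=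
      cfcₙ_mul_self_mul_cfcₙ (.of_nonneg ha) hφ hφ0
    rw [h_sq, h_mid, ← cfcₙ_smul r _ a (by fun_prop) (by simp [hφ0]),
      ← cfcₙ_sub _ _ a (by fun_prop) (by simp) (by fun_prop) (by simp [hφ0])]
    exact cfcₙ_congr_of_nonneg ha fun x _ => hφ_mul x
  have h_conj : k * (a - b) * k ≤ r • (k * k) := by
    simpa only [hk.star_eq] using CStarAlgebra.star_left_conjugate_le_norm_smul (a := k)
      (b := a - b) ((IsSelfAdjoint.of_nonneg ha).sub (.of_nonneg hb))
  calc cut t a = k * a * k - r • (k * k) := h_cut.symm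
    _ ≤ k * a * k - k * (a - b) * k := sub_le_sub_left h_conj _
    _ = k * b * k := by noncomm_ring

end Comparison

/-! ### Quasitraces and dimension functions -/

section QuasiTrace

variable (τ : QuasiTrace W) {a b : W} {F G : ℝ → ℝ} {s t δ ε : ℝ}

lemma QuasiTrace.toFun_le_of_commute (ha : 0 ≤ a) (hab : a ≤ b) (hc : Commute a b) :
    τ.toFun a ≤ τ.toFun b := by
  have h_add := τ.map_add_of_commute a (b - a) ha (sub_nonneg.mpr hab)
    (by rw [mul_sub, sub_mul, hc.eq])
  rw [add_sub_cancel] at h_add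
  exact h_add ▸ le_self_add

lemma QuasiTrace.toFun_cfcₙ_le (ha : 0 ≤ a) (hF_nonneg : ∀ x, 0 ≤ x → 0 ≤ F x)
    (hFG : ∀ x, 0 ≤ x → F x ≤ G x) (hF : Continuous F := by fun_prop) (hF0 : F 0 = 0 := by simp)
    (hG : Continuous G := by fun_prop) (hG0 : G 0 = 0 := by simp) :
    τ.toFun (cfcₙ F a) ≤ τ.toFun (cfcₙ G a) :=
  τ.toFun_le_of_commute (cfcₙ_nonneg_of_nonneg ha hF_nonneg)
    (cfcₙ_le_cfcₙ ha hFG hF hF0 hG hG0) (cfcₙ_commute_cfcₙ F G a)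

lemma QuasiTrace.toFun_fEps_antitone (ha : 0 ≤ a) (hδ : 0 < δ) (h : δ ≤ ε) :
    τ.toFun (fEps ε a) ≤ τ.toFun (fEps δ a) :=
  τ.toFun_cfcₙ_le ha (fun x _ => cutoff_nonneg ε x) fun _ hx => cutoff_antitone hδ h hx

lemma QuasiTrace.monotone_toFun_fEps (ha : 0 ≤ a) :
    Monotone fun n : ℕ => τ.toFun (fEps (1 / ((n : ℝ) + 1)) a) := fun m n h =>
  τ.toFun_fEps_antitone ha (by positivity) (by gcongr)

lemma QuasiTrace.toFun_cfcₙ_le_dTau (ha : 0 ≤ a) (hδ : 0 < δ) (hF_nonneg : ∀ x, 0 ≤ x → 0 ≤ F x)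
    (hF_one : ∀ x, 0 ≤ x → F x ≤ 1) (hF_zero : ∀ x, 0 ≤ x → x ≤ δ → F x = 0)
    (hF : Continuous F := by fun_prop) : τ.toFun (cfcₙ F a) ≤ dTau τ a := by
  obtain ⟨n, hn⟩ := exists_nat_one_div_lt hδ
  refine le_iSup_of_le n <| τ.toFun_cfcₙ_le ha hF_nonneg (fun x hx => ?_)
    (hF0 := hF_zero 0 le_rfl hδ.le)
  rcases le_total x δ with h | h
  · exact (hF_zero x hx h).trans_le (cutoff_nonneg _ _)
  · exact (hF_one x hx).trans_eq (cutoff_of_le (by positivity) (hn.le.trans h)).symm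

lemma QuasiTrace.toFun_fEps_le_dTau (ha : 0 ≤ a) (hδ : 0 < δ) : τ.toFun (fEps δ a) ≤ dTau τ a :=
  τ.toFun_cfcₙ_le_dTau ha (half_pos hδ) (fun x _ => cutoff_nonneg δ x)
    (fun x _ => cutoff_le_one δ x) fun _ _ => cutoff_of_le_half hδ

lemma dTau_cut_le_toFun_cfcₙ (ha : 0 ≤ a) (ht : 0 ≤ t) (hF_nonneg : ∀ x, 0 ≤ x → 0 ≤ F x)
    (hF_one : ∀ x, t ≤ x → 1 ≤ F x) (hF : Continuous F := by fun_prop)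
    (hF0 : F 0 = 0 := by simp) : dTau τ (cut t a) ≤ τ.toFun (cfcₙ F a) := by
  refine iSup_le fun n => ?_
  rw [fEps_cut _ ht ha]
  refine τ.toFun_cfcₙ_le ha (fun x _ => cutoff_nonneg _ _) (fun x hx => ?_)
    (hF0 := by simp [max_eq_right (neg_nonpos.mpr ht)]) (hG0 := hF0)
  rcases le_total x t with h | h
  · rw [max_eq_right (sub_nonpos.mpr h), cutoff_zero]
    exact hF_nonneg x hx
  · exact (cutoff_le_one _ _).trans (hF_one x h)

lemma QuasiTrace.toFun_cfcₙ_le_dTau_cut (ha : 0 ≤ a) (hs : 0 ≤ s) (hst : s < t)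
    (hF_nonneg : ∀ x, 0 ≤ x → 0 ≤ F x) (hF_one : ∀ x, 0 ≤ x → F x ≤ 1)
    (hF_zero : ∀ x, 0 ≤ x → x ≤ t → F x = 0) (hF : Continuous F := by fun_prop) :
    τ.toFun (cfcₙ F a) ≤ dTau τ (cut s a) := by
  have hst' : 0 < t - s := sub_pos.mpr hst
  refine le_trans ?_ (τ.toFun_fEps_le_dTau (cut_nonneg s ha) hst')
  rw [fEps_cut _ hs ha]
  refine τ.toFun_cfcₙ_le ha hF_nonneg (fun x hx => ?_) (hF0 := hF_zero 0 le_rfl (hs.trans hst.le))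
    (hG0 := by simp [max_eq_right (neg_nonpos.mpr hs)])
  rcases le_total x t with h | h
  · exact (hF_zero x hx h).trans_le (cutoff_nonneg _ _)
  · refine (hF_one x hx).trans_eq (cutoff_of_le hst' ?_).symm
    exact le_max_of_le_left (sub_le_sub_right h s)

lemma dTau_cfcₙ_le_dTau_cfcₙ (ha : 0 ≤ a) (hFG : ∀ x, 0 ≤ x → F x ≤ G x)
    (hF : Continuous F := by fun_prop) (hF0 : F 0 = 0 := by simp)
    (hG : Continuous G := by fun_prop) (hG0 : G 0 = 0 := by simp) :
    dTau τ (cfcₙ F a) ≤ dTau τ (cfcₙ G a) := by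
  refine iSup_mono fun n => ?_
  rw [fEps, fEps, cfcₙ_cfcₙ ha (fun _ _ => rfl) hF hF0, cfcₙ_cfcₙ ha (fun _ _ => rfl) hG hG0]
  exact τ.toFun_cfcₙ_le ha (fun x _ => cutoff_nonneg _ _)
    (fun x hx => monotone_cutoff (by positivity) (hFG x hx)) (hF0 := by simp [hF0])
    (hG0 := by simp [hG0])

lemma dTau_cfcₙ_le (ha : 0 ≤ a) (hF : Continuous F := by fun_prop)
    (hF0 : F 0 = 0 := by simp) : dTau τ (cfcₙ F a) ≤ dTau τ a := by
  refine iSup_le fun n => ?_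
  have hn : (0 : ℝ) < 1 / (n + 1) := by positivity
  have h_near : ∀ᶠ x in 𝓝 (0 : ℝ), F x < 1 / (n + 1) / 2 :=
    hF.continuousAt.eventually_lt_const (by simpa only [hF0] using half_pos hn)
  obtain ⟨δ, hδ, hFδ⟩ := Metric.eventually_nhds_iff.mp h_near
  rw [fEps, cfcₙ_cfcₙ ha (fun _ _ => rfl) hF hF0]
  refine τ.toFun_cfcₙ_le_dTau ha (half_pos hδ) (fun x _ => cutoff_nonneg _ _)
    (fun x _ => cutoff_le_one _ _) fun x hx hxδ => cutoff_of_le_half hn (hFδ ?_).le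
  rw [dist_zero_right, Real.norm_of_nonneg hx]
  linarith

lemma dTau_le_dTau_cfcₙ (ha : 0 ≤ a) (hF_mono : Monotone F) (hF_pos : ∀ x, 0 < x → 0 < F x)
    (hF : Continuous F := by fun_prop) (hF0 : F 0 = 0 := by simp) :
    dTau τ a ≤ dTau τ (cfcₙ F a) := by
  refine iSup_le fun n => ?_
  have hn : (0 : ℝ) < 1 / (n + 1) := by positivity
  set δ := F (1 / (n + 1) / 2)
  have hδ : 0 < δ := hF_pos _ (half_pos hn)
  have hFa : 0 ≤ cfcₙ F a := cfcₙ_nonneg_of_nonneg ha fun x hx => hF0.ge.trans (hF_mono hx)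
  refine le_trans ?_ (τ.toFun_fEps_le_dTau hFa hδ)
  rw [fEps, fEps, cfcₙ_cfcₙ ha (fun _ _ => rfl) hF hF0]
  refine τ.toFun_cfcₙ_le ha (fun x _ => cutoff_nonneg _ x) (fun x _ => ?_) (hG0 := by simp [hF0])
  rcases le_total x (1 / (n + 1) / 2) with h | h
  · exact (cutoff_of_le_half hn h).trans_le (cutoff_nonneg _ _)
  · exact (cutoff_le_one _ x).trans_eq (cutoff_of_le hδ (hF_mono h)).symm

lemma dTau_cut_antitone (ha : 0 ≤ a) (hs : 0 ≤ s) (hst : s ≤ t) :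
    dTau τ (cut t a) ≤ dTau τ (cut s a) :=
  dTau_cfcₙ_le_dTau_cfcₙ τ ha (fun x _ => by gcongr) (hF0 := by simpa using hs.trans hst)
    (hG0 := by simpa using hs)

lemma dTau_cut_le (ha : 0 ≤ a) (ht : 0 ≤ t) : dTau τ (cut t a) ≤ dTau τ a :=
  (dTau_cut_antitone τ ha le_rfl ht).trans_eq (by rw [cut_zero ha])

lemma dTau_le_of_forall_cut_le (ha : 0 ≤ a) {C : ℝ≥0∞}
    (h : ∀ n : ℕ, dTau τ (cut (1 / ((n : ℝ) + 1)) a) ≤ C) : dTau τ a ≤ C := by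
  refine iSup_le fun n => ?_
  have hn : (0 : ℝ) < 1 / (n + 1) := by positivity
  obtain ⟨m, hm⟩ := exists_nat_one_div_lt (half_pos hn)
  exact (τ.toFun_cfcₙ_le_dTau_cut ha (by positivity) hm (fun x _ => cutoff_nonneg _ x)
    (fun x _ => cutoff_le_one _ x) fun _ _ => cutoff_of_le_half hn).trans (h m)

lemma QuasiTrace.toFun_add_of_mul_eq_zero (ha : 0 ≤ a) (hb : 0 ≤ b) (h : a * b = 0) :
    τ.toFun (a + b) = τ.toFun a + τ.toFun b :=
  τ.map_add_of_commute a b ha hb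
    (h.trans (mul_eq_zero_symm (.of_nonneg ha) (.of_nonneg hb) h).symm)

lemma dTau_add_of_mul_eq_zero (ha : 0 ≤ a) (hb : 0 ≤ b) (h : a * b = 0) :
    dTau τ (a + b) = dTau τ a + dTau τ b := by
  have ha' : IsSelfAdjoint a := .of_nonneg ha
  have hb' : IsSelfAdjoint b := .of_nonneg hb
  rw [dTau, dTau, dTau,
    ENNReal.iSup_add_iSup_of_monotone (τ.monotone_toFun_fEps ha) (τ.monotone_toFun_fEps hb)]
  refine iSup_congr fun n => ?_
  rw [fEps, cfcₙ_add_of_mul_eq_zero ha' hb' h]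
  exact τ.toFun_add_of_mul_eq_zero (fEps_nonneg _ ha) (fEps_nonneg _ hb)
    (cfcₙ_mul_cfcₙ_eq_zero ha' hb' h)

lemma dTau_cut_add_of_mul_eq_zero (ht : 0 ≤ t) (ha : 0 ≤ a) (hb : 0 ≤ b) (h : a * b = 0) :
    dTau τ (cut t (a + b)) = dTau τ (cut t a) + dTau τ (cut t b) := by
  have ha' : IsSelfAdjoint a := .of_nonneg ha
  have hb' : IsSelfAdjoint b := .of_nonneg hb
  rw [cut, cfcₙ_add_of_mul_eq_zero ha' hb' h (by fun_prop) (by simpa using ht)]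
  exact dTau_add_of_mul_eq_zero τ (cut_nonneg t ha) (cut_nonneg t hb)
    (cut_mul_cut_eq_zero ht ht ha' hb' h)

@[simp]
lemma dTau_zero {B : Type*} [NonUnitalCStarAlgebra B] [PartialOrder B] (τ : QuasiTrace B) :
    dTau τ (0 : B) = 0 := by
  simp [dTau, fEps, τ.map_zero]

lemma dTau_cut_sum_of_pairwise_mul_eq_zero {ι : Type*} {s : Finset ι} {a : ι → W} (ht : 0 ≤ t)
    (ha : ∀ i, 0 ≤ a i) (h : (s : Set ι).Pairwise fun i j => a i * a j = 0) :
    dTau τ (cut t (∑ i ∈ s, a i)) = ∑ i ∈ s, dTau τ (cut t (a i)) := by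
  classical
  induction s using Finset.induction_on with
  | empty => simp [cut]
  | insert i s hi ih =>
    have hsum : a i * ∑ j ∈ s, a j = 0 := by
      rw [Finset.mul_sum]
      exact Finset.sum_eq_zero fun j hj =>
        h (by simp) (by simp [hj]) (ne_of_mem_of_not_mem hj hi).symm
    rw [Finset.sum_insert hi, Finset.sum_insert hi, dTau_cut_add_of_mul_eq_zero τ ht (ha i)
      (Finset.sum_nonneg fun j _ => ha j) hsum, ih (h.mono (by simp))]

end QuasiTrace

section CuntzComparison

variable (τ : QuasiTrace W) {a b : W} {s t : ℝ}

lemma exists_continuous_mul_self_mul_eq {F : ℝ → ℝ} (hF : Continuous F) (hF_nonneg : ∀ x, 0 ≤ F x)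
    {s : ℝ} (hs : 0 < s) (hF_zero : ∀ x ≤ s, F x = 0) :
    ∃ k : ℝ → ℝ, Continuous k ∧ k 0 = 0 ∧ ∀ x, k x * x * k x = F x := by
  have h_pos (x : ℝ) : 0 < max x s := lt_max_of_lt_right hs
  refine ⟨fun x => √(F x / max x s), Real.continuous_sqrt.comp
    (hF.div (by fun_prop) fun x => (h_pos x).ne'), by simp [hF_zero 0 hs.le], fun x => ?_⟩
  rw [mul_right_comm, Real.mul_self_sqrt (div_nonneg (hF_nonneg x) (h_pos x).le)]
  rcases le_total x s with h | h
  · simp [hF_zero x h]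
  · rw [max_eq_left h, div_mul_cancel₀ _ (hs.trans_le h).ne']

-- With `k(x)² x = F(x)`, the element `z k(z*z)` implements the trace identity for `F`.
lemma QuasiTrace.toFun_cfcₙ_star_mul_self {B : Type*} [NonUnitalCStarAlgebra B] [PartialOrder B]
    (τ : QuasiTrace B) {F : ℝ → ℝ} (hF : Continuous F) (hF_nonneg : ∀ x, 0 ≤ F x) (hs : 0 < s)
    (hF_zero : ∀ x ≤ s, F x = 0) (z : B) :
    τ.toFun (cfcₙ F (star z * z)) = τ.toFun (cfcₙ F (z * star z)) := by
  obtain ⟨k, hk, hk0, hkF⟩ := exists_continuous_mul_self_mul_eq hF hF_nonneg hs hF_zero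
  have h_conj {p : B} (hp : IsSelfAdjoint p) : cfcₙ k p * p * cfcₙ k p = cfcₙ F p := by
    simp only [cfcₙ_mul_self_mul_cfcₙ hp hk hk0, hkF]
  have h_left : IsSelfAdjoint (star z * z) := .star_mul_self z
  have h_right : IsSelfAdjoint (z * star z) := .mul_star_self z
  have h_swap : z * cfcₙ k (star z * z) = cfcₙ k (z * star z) * z :=
    (semiconjBy_cfcₙ h_left h_right (by simp [SemiconjBy, mul_assoc]) hk hk0).eq
  have h_trace := τ.map_star_mul_self (z * cfcₙ k (star z * z))
  have h_star (p : B) : star (cfcₙ k p) = cfcₙ k p := IsSelfAdjoint.cfcₙ.star_eq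
  have h₁ : star (z * cfcₙ k (star z * z)) * (z * cfcₙ k (star z * z)) =
      cfcₙ F (star z * z) := by
    rw [← h_conj h_left, star_mul, h_star]
    noncomm_ring
  have h₂ : (z * cfcₙ k (star z * z)) * star (z * cfcₙ k (star z * z)) =
      cfcₙ F (z * star z) := by
    rw [← h_conj h_right, h_swap, star_mul, h_star]
    noncomm_ring
  rwa [h₁, h₂] at h_trace

lemma dTau_cut_star_mul_self (ht : 0 ≤ t) (z : W) :
    dTau τ (cut t (star z * z)) = dTau τ (cut t (z * star z)) := by
  refine iSup_congr fun n => ?_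
  have hn : (0 : ℝ) < 1 / (n + 1) := by positivity
  rw [fEps_cut _ ht (star_mul_self_nonneg z), fEps_cut _ ht (mul_star_self_nonneg z)]
  refine τ.toFun_cfcₙ_star_mul_self (by fun_prop) (fun x => cutoff_nonneg _ _) (half_pos hn)
    (fun x hx => cutoff_of_le_half hn ?_) z
  exact max_le (by linarith) (by linarith)

lemma dTau_star_mul_self (z : W) : dTau τ (star z * z) = dTau τ (z * star z) := by
  simpa only [cut_zero (star_mul_self_nonneg z), cut_zero (mul_star_self_nonneg z)]
    using dTau_cut_star_mul_self τ le_rfl z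

lemma QuasiTrace.toFun_le_of_tendsto {B : Type*} [NonUnitalCStarAlgebra B] [PartialOrder B]
    (τ : QuasiTrace B) {u : ℕ → B} {a : B} (hu : ∀ n, 0 ≤ u n) (ha : 0 ≤ a)
    (hua : Tendsto u atTop (𝓝 a)) {C : ℝ≥0∞} (hC : ∀ n, τ.toFun (u n) ≤ C) : τ.toFun a ≤ C := by
  by_contra! h
  have hua' : Tendsto u atTop (𝓝[{a : B | 0 ≤ a}] a) :=
    tendsto_nhdsWithin_iff.mpr ⟨hua, .of_forall hu⟩
  obtain ⟨n, hn⟩ := (hua'.eventually (τ.lowerSemicontinuousOn a ha C h)).exists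
  exact (hC n).not_gt hn

lemma dTau_le_of_tendsto {u : ℕ → W} (hu : ∀ n, 0 ≤ u n) (ha : 0 ≤ a)
    (hua : Tendsto u atTop (𝓝 a)) {C : ℝ≥0∞} (hC : ∀ n, dTau τ (u n) ≤ C) : dTau τ a ≤ C :=
  iSup_le fun m => τ.toFun_le_of_tendsto (fun n => fEps_nonneg _ (hu n)) (fEps_nonneg _ ha)
    (tendsto_cfcₙ hu ha hua) fun n => (le_iSup _ m).trans (hC n)

lemma dTau_mul_star_self_le {v z : W} (hv : IsSelfAdjoint v) (hvz : v * z = z) :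
    dTau τ (z * star z) ≤ τ.toFun (v * v) := by
  refine iSup_le fun m => ?_
  set p := fEps (1 / ((m : ℝ) + 1)) (z * star z)
  have hz : 0 ≤ z * star z := mul_star_self_nonneg z
  have hp : 0 ≤ p := fEps_nonneg _ hz
  have hvp : v * p = p := mul_eq_self_of_mem_her (by rw [← mul_assoc, hvz]) (fEps_mem_her _ hz)
  have hpv : p * v = p := by
    simpa [hv.star_eq, (IsSelfAdjoint.of_nonneg hp).star_eq] using congrArg star hvp
  have h_le : p ≤ v * v := by
    calc p = star v * p * v := by rw [hv.star_eq, hvp, hpv]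
      _ ≤ ‖p‖ • (star v * v) := CStarAlgebra.star_left_conjugate_le_norm_smul (.of_nonneg hp)
      _ ≤ (1 : ℝ) • (star v * v) := by
        gcongr
        · exact star_mul_self_nonneg v
        · exact norm_fEps_le_one _ hz
      _ = v * v := by rw [one_smul, hv.star_eq]
  refine τ.toFun_le_of_commute hp h_le ?_
  rw [Commute, SemiconjBy, ← mul_assoc, hpv, hpv, mul_assoc, hvp, hvp]

lemma dTau_conj_cut_le (hb : 0 ≤ b) (hs : 0 < s) (x : W) :
    dTau τ (star x * cut s b * x) ≤ dTau τ b := by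
  let root : W := cfcₙ (fun y : ℝ => √(max (y - s) 0)) b
  let unit : W := cfcₙ (fun y : ℝ => √(cutoff s y)) b
  have h_root : root * root = cut s b :=
    cfcₙ_mul_cfcₙ hb (fun y _ => Real.mul_self_sqrt (le_max_right _ _)) (hf0 := by simp [hs.le])
      (hg0 := by simp [hs.le])
  have h_unit : unit * unit = fEps s b :=
    cfcₙ_mul_cfcₙ hb fun y _ => Real.mul_self_sqrt (cutoff_nonneg s y)
  have h_unit_root : unit * root = root := by
    refine cfcₙ_mul_cfcₙ hb (fun y _ => ?_) (hg0 := by simp [hs.le])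
    rcases le_total y s with h | h
    · simp [max_eq_right (sub_nonpos.mpr h)]
    · simp [cutoff_of_le hs h]
  have h_eq : star x * cut s b * x = star (root * x) * (root * x) := by
    rw [star_mul, IsSelfAdjoint.cfcₙ.star_eq, ← h_root]
    noncomm_ring
  calc dTau τ (star x * cut s b * x) = dTau τ (root * x * star (root * x)) := by
        rw [h_eq, dTau_star_mul_self]
    _ ≤ τ.toFun (unit * unit) :=
        dTau_mul_star_self_le τ .cfcₙ (by rw [← mul_assoc, h_unit_root])
    _ ≤ dTau τ b := h_unit ▸ τ.toFun_fEps_le_dTau hb hs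

lemma dTau_conj_le (hb : 0 ≤ b) (x : W) : dTau τ (star x * b * x) ≤ dTau τ b :=
  dTau_le_of_tendsto τ (fun _ => star_left_conjugate_nonneg (cut_nonneg _ hb) x)
    (star_left_conjugate_nonneg hb x) (((tendsto_cut hb).const_mul (star x)).mul_const x)
    fun _ => dTau_conj_cut_le τ hb (by positivity) x

theorem dTau_le_of_cuntzLE (ha : 0 ≤ a) (hb : 0 ≤ b) (h : CuntzLE a b) : dTau τ a ≤ dTau τ b := by
  obtain ⟨x, hx⟩ := h
  refine dTau_le_of_tendsto τ (fun n => star_left_conjugate_nonneg hb (x n)) ha ?_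
    fun n => dTau_conj_le τ hb (x n)
  rw [tendsto_iff_norm_sub_tendsto_zero]
  simpa only [norm_sub_rev] using hx

lemma dTau_le_of_le_smul (ha : 0 ≤ a) (hb : 0 ≤ b) {C : ℝ} (hC : 0 ≤ C) (h : a ≤ C • b) :
    dTau τ a ≤ dTau τ b :=
  dTau_le_of_cuntzLE τ ha hb (cuntzLE_of_le_smul ha hb hC h)

lemma dTau_mono (ha : 0 ≤ a) (hab : a ≤ b) : dTau τ a ≤ dTau τ b :=
  dTau_le_of_le_smul τ ha (ha.trans hab) zero_le_one (by rwa [one_smul])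

lemma dTau_cut_le_of_norm_sub_lt (ha : 0 ≤ a) (hb : 0 ≤ b) (h : ‖a - b‖ < t) :
    dTau τ (cut t a) ≤ dTau τ b := by
  obtain ⟨k, hk, h_le⟩ := exists_cut_le_conj ha hb h
  refine (dTau_mono τ (cut_nonneg t ha) h_le).trans ?_
  simpa only [hk.star_eq] using dTau_conj_le τ hb k

lemma dTau_cut_le_dTau_cut_of_norm_sub_add_lt (ha : 0 ≤ a) (hb : 0 ≤ b) (hs : 0 ≤ s)
    (h : ‖a - b‖ + s < t) : dTau τ (cut t a) ≤ dTau τ (cut s b) := by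
  refine dTau_cut_le_of_norm_sub_lt τ ha (cut_nonneg s hb) (lt_of_le_of_lt ?_ h)
  calc ‖a - cut s b‖ ≤ ‖a - b‖ + ‖b - cut s b‖ := norm_sub_le_norm_sub_add_norm_sub _ _ _
    _ ≤ ‖a - b‖ + s := by gcongr; exact norm_sub_cut_le hs hb

theorem exists_dTau_cut_le_of_cuntzLE (ha : 0 ≤ a) (hb : 0 ≤ b) (h : CuntzLE a b) (ht : 0 < t) :
    ∃ s : ℝ, 0 < s ∧ ∀ τ : QuasiTrace W, dTau τ (cut t a) ≤ dTau τ (cut s b) := by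
  obtain ⟨x, hx⟩ := h
  obtain ⟨n, hn⟩ := (hx.eventually_lt_const (half_pos ht)).exists
  set y := x n
  set s := t / (2 * (‖y‖ ^ 2 + 1)) with hs_def
  have hs : 0 < s := by positivity
  have hst : s * (‖y‖ ^ 2 + 1) = t / 2 := by rw [hs_def]; field_simp
  refine ⟨s, hs, fun τ => (dTau_cut_le_of_norm_sub_lt τ ha
    (star_left_conjugate_nonneg (cut_nonneg s hb) y) ?_).trans
    (dTau_conj_le τ (cut_nonneg s hb) y)⟩
  have h_cut : ‖star y * (b - cut s b) * y‖ ≤ s * ‖y‖ ^ 2 := by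
    calc ‖star y * (b - cut s b) * y‖ ≤ ‖star y‖ * ‖b - cut s b‖ * ‖y‖ := norm_mul₃_le
      _ ≤ ‖y‖ * s * ‖y‖ := by rw [norm_star]; gcongr; exact norm_sub_cut_le hs.le hb
      _ = s * ‖y‖ ^ 2 := by ring
  calc ‖a - star y * cut s b * y‖ =
        ‖(a - star y * b * y) + star y * (b - cut s b) * y‖ := by congr 1; noncomm_ring
    _ ≤ ‖a - star y * b * y‖ + ‖star y * (b - cut s b) * y‖ := norm_add_le _ _
    _ < t := by nlinarith

lemma dTau_star_mul_self_mul_right_le (x y : W) :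
    dTau τ (star (x * y) * (x * y)) ≤ dTau τ (star x * x) := by
  have h_eq : star (x * y) * (x * y) = star y * (star x * x) * y := by
    rw [star_mul]; noncomm_ring
  exact h_eq ▸ dTau_conj_le τ (star_mul_self_nonneg x) y

lemma dTau_star_mul_self_mul_left_le (x y : W) :
    dTau τ (star (y * x) * (y * x)) ≤ dTau τ (star x * x) := by
  rw [dTau_star_mul_self τ (y * x), dTau_star_mul_self τ x]
  simpa only [star_mul, star_star] using dTau_star_mul_self_mul_right_le τ (star x) (star y)

end CuntzComparison

/-! ### Orthogonal copies and subadditivity -/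

section Copies

/-- A sequence of maps `L k` behaving like left multiplication by isometries with mutually
orthogonal ranges; for a stabilization these are multipliers moving matrix rows apart. -/
def IsOrthogonalIsometryFamily (L : ℕ → W → W) : Prop :=
  ∀ k l x y, star (L k x) * L l y = if k = l then star x * y else 0

/-- The copy `L k a (L k)*` of a positive element `a` in the `k`-th orthogonal position, written
through `√a` because `L k` acts on the left only. -/
def orthCopy (L : ℕ → W → W) (k : ℕ) (a : W) : W := L k (CFC.sqrt a) * star (L k (CFC.sqrt a))

variable {L : ℕ → W → W} {a b : W} {s t : ℝ}

lemma orthCopy_nonneg (L : ℕ → W → W) (k : ℕ) (a : W) : 0 ≤ orthCopy L k a :=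
  mul_star_self_nonneg _

lemma star_sqrt_mul_sqrt (ha : 0 ≤ a) : star (CFC.sqrt a) * CFC.sqrt a = a := by
  rw [(isSelfAdjoint_sqrt a).star_eq, CFC.sqrt_mul_sqrt_self a]

lemma star_add_mul_add_le (x y : W) :
    star (x + y) * (x + y) ≤ (2 : ℝ) • (star x * x + star y * y) := by
  rw [← sub_nonneg]
  convert star_mul_self_nonneg (x - y) using 1
  rw [two_smul, star_sub, star_add]
  noncomm_ring

namespace IsOrthogonalIsometryFamily

variable (hL : IsOrthogonalIsometryFamily L) (τ : QuasiTrace W)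
include hL

lemma dTau_cut_orthCopy (k : ℕ) (ha : 0 ≤ a) (ht : 0 ≤ t) :
    dTau τ (cut t (orthCopy L k a)) = dTau τ (cut t a) := by
  rw [orthCopy, ← dTau_cut_star_mul_self τ ht, hL, if_pos rfl, star_sqrt_mul_sqrt ha]

lemma orthCopy_mul_orthCopy {k l : ℕ} (hkl : k ≠ l) (a b : W) :
    orthCopy L k a * orthCopy L l b = 0 := by
  rw [orthCopy, orthCopy, mul_assoc, ← mul_assoc (star _), hL, if_neg hkl, zero_mul, mul_zero]

lemma dTau_cut_sum_orthCopy (s : Finset ℕ) {a : ℕ → W} (ha : ∀ k, 0 ≤ a k) (ht : 0 ≤ t) :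
    dTau τ (cut t (∑ k ∈ s, orthCopy L k (a k))) = ∑ k ∈ s, dTau τ (cut t (a k)) := by
  rw [dTau_cut_sum_of_pairwise_mul_eq_zero τ ht (fun k => orthCopy_nonneg L k (a k))
    fun k _ l _ hkl => hL.orthCopy_mul_orthCopy hkl _ _]
  exact Finset.sum_congr rfl fun k _ => hL.dTau_cut_orthCopy τ k (ha k) ht

lemma dTau_sum_orthCopy (s : Finset ℕ) {a : ℕ → W} (ha : ∀ k, 0 ≤ a k) :
    dTau τ (∑ k ∈ s, orthCopy L k (a k)) = ∑ k ∈ s, dTau τ (a k) := by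
  simpa only [cut_zero (ha _), cut_zero (Finset.sum_nonneg fun k _ => orthCopy_nonneg L k (a k))]
    using hL.dTau_cut_sum_orthCopy τ s ha le_rfl

lemma dTau_cut_orthCopy_add_orthCopy (ha : 0 ≤ a) (hb : 0 ≤ b) (ht : 0 ≤ t) :
    dTau τ (cut t (orthCopy L 0 a + orthCopy L 1 b)) =
      dTau τ (cut t a) + dTau τ (cut t b) := by
  rw [dTau_cut_add_of_mul_eq_zero τ ht (orthCopy_nonneg _ _ _) (orthCopy_nonneg _ _ _)
    (hL.orthCopy_mul_orthCopy zero_ne_one a b), hL.dTau_cut_orthCopy τ 0 ha ht,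
    hL.dTau_cut_orthCopy τ 1 hb ht]

-- `v = L₀√a + L₁√b` satisfies `v*v = a + b` and `vv* ≤ 2(L₀aL₀* + L₁bL₁*)`.
lemma exists_star_mul_self_eq_add (ha : 0 ≤ a) (hb : 0 ≤ b) :
    ∃ v : W, star v * v = a + b ∧ CuntzLE (v * star v) (orthCopy L 0 a + orthCopy L 1 b) := by
  set x := L 0 (CFC.sqrt a) with hx
  set y := L 1 (CFC.sqrt b) with hy
  refine ⟨x + y, ?_, cuntzLE_of_le_smul (mul_star_self_nonneg _)
    (add_nonneg (orthCopy_nonneg L 0 a) (orthCopy_nonneg L 1 b)) zero_le_two ?_⟩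
  · rw [star_add, add_mul, mul_add, mul_add, hx, hy, hL, hL, hL, hL]
    simp [star_sqrt_mul_sqrt ha, star_sqrt_mul_sqrt hb]
  · simpa only [orthCopy, ← hx, ← hy, star_add, star_star]
      using star_add_mul_add_le (star x) (star y)

lemma exists_dTau_cut_add_le (ha : 0 ≤ a) (hb : 0 ≤ b) (ht : 0 < t) :
    ∃ s : ℝ, 0 < s ∧ ∀ τ : QuasiTrace W,
      dTau τ (cut t (a + b)) ≤ dTau τ (cut s a) + dTau τ (cut s b) := by
  obtain ⟨v, hv, h_le⟩ := hL.exists_star_mul_self_eq_add ha hb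
  obtain ⟨s, hs, h_cut⟩ := exists_dTau_cut_le_of_cuntzLE (mul_star_self_nonneg v)
    (add_nonneg (orthCopy_nonneg _ _ _) (orthCopy_nonneg _ _ _)) h_le ht
  refine ⟨s, hs, fun τ => ?_⟩
  rw [← hv, dTau_cut_star_mul_self τ ht.le, ← hL.dTau_cut_orthCopy_add_orthCopy τ ha hb hs.le]
  exact h_cut τ

lemma dTau_add_le (ha : 0 ≤ a) (hb : 0 ≤ b) : dTau τ (a + b) ≤ dTau τ a + dTau τ b := by
  refine dTau_le_of_forall_cut_le τ (add_nonneg ha hb) fun n => ?_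
  obtain ⟨s, hs, h⟩ := hL.exists_dTau_cut_add_le ha hb (t := 1 / ((n : ℝ) + 1)) (by positivity)
  exact (h τ).trans (add_le_add (dTau_cut_le τ ha hs.le) (dTau_cut_le τ hb hs.le))

lemma exists_dTau_cut_star_add_mul_add_le (x y : W) (ht : 0 < t) :
    ∃ s : ℝ, 0 < s ∧ ∀ τ : QuasiTrace W, dTau τ (cut t (star (x + y) * (x + y))) ≤
      dTau τ (cut s (star x * x)) + dTau τ (cut s (star y * y)) := by
  have hx := star_mul_self_nonneg x
  have hy := star_mul_self_nonneg y
  obtain ⟨r, hr, h_sum⟩ := exists_dTau_cut_le_of_cuntzLE (star_mul_self_nonneg (x + y))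
    (add_nonneg hx hy) (cuntzLE_of_le_smul (star_mul_self_nonneg _) (add_nonneg hx hy) zero_le_two
      (star_add_mul_add_le x y)) ht
  obtain ⟨s, hs, h_cut⟩ := hL.exists_dTau_cut_add_le hx hy hr
  exact ⟨s, hs, fun τ => (h_sum τ).trans (h_cut τ)⟩

lemma dTau_star_add_mul_add_le (x y : W) :
    dTau τ (star (x + y) * (x + y)) ≤ dTau τ (star x * x) + dTau τ (star y * y) := by
  have hx := star_mul_self_nonneg x
  have hy := star_mul_self_nonneg y
  exact (dTau_le_of_le_smul τ (star_mul_self_nonneg _) (add_nonneg hx hy) zero_le_two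
    (star_add_mul_add_le x y)).trans (hL.dTau_add_le τ hx hy)

end IsOrthogonalIsometryFamily

end Copies

section Stabilization

namespace Stabilization

variable {A W : Type*} [NonUnitalCStarAlgebra A] [NonUnitalCStarAlgebra W] (SB : Stabilization A W)

/-- The finitely supported matrix `p` over `A`, viewed as an element of the stabilization with its
row indices relabelled by `f`. -/
def ofFinsupp (f : ℕ → ℕ) : ((ℕ × ℕ) →₀ A) →ₗ[ℂ] W :=
  Finsupp.lsum ℂ fun p : ℕ × ℕ => SB.emb (f p.1) p.2

lemma ofFinsupp_single (f : ℕ → ℕ) (p : ℕ × ℕ) (a : A) :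
    SB.ofFinsupp f (Finsupp.single p a) = SB.emb (f p.1) p.2 a := by
  simp [ofFinsupp]

lemma denseRange_ofFinsupp_id : DenseRange (SB.ofFinsupp id) := by
  have h_span : Submodule.span ℂ {w : W | ∃ (i j : ℕ) (a : A), w = SB.emb i j a} ≤
      LinearMap.range (SB.ofFinsupp id) := by
    rw [Submodule.span_le]
    rintro _ ⟨i, j, a, rfl⟩
    exact ⟨Finsupp.single (i, j) a, SB.ofFinsupp_single id (i, j) a⟩
  exact SB.dense_span.mono h_span

lemma induction_on {p : W → Prop} (w : W) (isClosed : IsClosed {w | p w})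
    (emb : ∀ i j a, p (SB.emb i j a)) (add : ∀ x y, p x → p y → p (x + y)) : p w := by
  refine SB.denseRange_ofFinsupp_id.induction_on w isClosed fun u => ?_
  induction u using Finsupp.induction_linear with
  | zero => simpa only [map_zero] using emb 0 0 0
  | add u v hu hv => simpa only [map_add] using add _ _ hu hv
  | single q a => simpa only [ofFinsupp_single] using emb _ _ _

lemma star_ofFinsupp_mul_ofFinsupp (k l : ℕ) (u v : (ℕ × ℕ) →₀ A) :
    star (SB.ofFinsupp (Nat.pair k) u) * SB.ofFinsupp (Nat.pair l) v =
      if k = l then star (SB.ofFinsupp id u) * SB.ofFinsupp id v else 0 := by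
  induction u using Finsupp.induction_linear with
  | zero => simp
  | add u u' h h' =>
    simp only [map_add, star_add, add_mul, h, h']
    split_ifs <;> simp
  | single p a =>
    induction v using Finsupp.induction_linear with
    | zero => simp
    | add v v' h h' =>
      simp only [map_add, mul_add, h, h']
      split_ifs <;> simp
    | single q b =>
      simp only [ofFinsupp_single, emb_star, emb_mul]
      by_cases hkl : k = l <;> by_cases hpq : p.1 = q.1 <;> simp [hkl, hpq, Nat.pair_eq_pair]

lemma norm_ofFinsupp_pair (k : ℕ) (u : (ℕ × ℕ) →₀ A) :
    ‖SB.ofFinsupp (Nat.pair k) u‖ = ‖SB.ofFinsupp id u‖ := by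
  have h := congrArg norm (SB.star_ofFinsupp_mul_ofFinsupp k k u u)
  rw [if_pos rfl, CStarRing.norm_star_mul_self, CStarRing.norm_star_mul_self] at h
  exact mul_self_inj_of_nonneg (norm_nonneg _) (norm_nonneg _) |>.mp h

theorem exists_isOrthogonalIsometryFamily (SB : Stabilization A W) :
    ∃ L : ℕ → W → W, IsOrthogonalIsometryFamily L := by
  let L (k : ℕ) : W →L[ℂ] W := (SB.ofFinsupp (Nat.pair k)).extendOfNorm (SB.ofFinsupp id)
  have hL (k : ℕ) (u : (ℕ × ℕ) →₀ A) : L k (SB.ofFinsupp id u) = SB.ofFinsupp (Nat.pair k) u :=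
    LinearMap.extendOfNorm_eq SB.denseRange_ofFinsupp_id
      ⟨1, fun v => by rw [one_mul, norm_ofFinsupp_pair]⟩ u
  refine ⟨fun k => L k, fun k l x y => ?_⟩
  induction x, y using SB.denseRange_ofFinsupp_id.induction_on₂ with
  | hp => split_ifs <;> exact isClosed_eq (by fun_prop) (by fun_prop)
  | h u v =>
    change star (L k _) * L l _ = _
    rw [hL, hL, star_ofFinsupp_mul_ofFinsupp]

lemma isometry_emb (i j : ℕ) : Isometry (SB.emb i j) :=
  AddMonoidHomClass.isometry_of_norm _ (SB.norm_emb i j)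

lemma exists_emb_mul_ne_zero {y : W} (hy : y ≠ 0) : ∃ i j a, SB.emb i j a * y ≠ 0 := by
  by_contra! h
  have h_mul (w : W) : w * y = 0 := by
    induction w using SB.induction_on with
    | isClosed => exact isClosed_eq (by fun_prop) (by fun_prop)
    | emb i j a => exact h i j a
    | add u v hu hv => rw [add_mul, hu, hv, add_zero]
  exact hy ((CStarRing.star_mul_self_eq_zero_iff y).mp (h_mul (star y)))

lemma exists_mul_emb_ne_zero {y : W} (hy : y ≠ 0) : ∃ k l b, y * SB.emb k l b ≠ 0 := by
  obtain ⟨l, k, b, h⟩ := SB.exists_emb_mul_ne_zero (star_ne_zero.mpr hy)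
  refine ⟨k, l, star b, fun h_zero => h ?_⟩
  simpa [SB.emb_star] using congrArg star h_zero

lemma emb_mul_mul_emb_mem_range (i j k l : ℕ) (a b : A) (w : W) :
    SB.emb i j a * w * SB.emb k l b ∈ Set.range (SB.emb i l) := by
  induction w using SB.induction_on with
  | isClosed =>
    exact (SB.isometry_emb i l).isClosedEmbedding.isClosed_range.preimage (by fun_prop)
  | emb m n c =>
    simp only [emb_mul, ite_mul, zero_mul]
    split_ifs
    exacts [⟨_, rfl⟩, ⟨0, map_zero _⟩, ⟨0, map_zero _⟩]
  | add u v hu hv =>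
    obtain ⟨p, hp⟩ := hu
    obtain ⟨q, hq⟩ := hv
    exact ⟨p + q, by rw [map_add, mul_add, add_mul, hp, hq]⟩

end Stabilization

section Ideal

variable {A W : Type*} [NonUnitalCStarAlgebra A] [NonUnitalCStarAlgebra W] {I : Set W}

lemma IsIdealIn.mul_mem_left (hI : IsIdealIn W Set.univ I) (b : W) {x : W} (hx : x ∈ I) :
    b * x ∈ I := (hI.2.2.2.2 x hx b trivial).2

lemma IsIdealIn.mul_mem_right (hI : IsIdealIn W Set.univ I) (b : W) {x : W} (hx : x ∈ I) :
    x * b ∈ I := (hI.2.2.2.2 x hx b trivial).1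

lemma IsIdealIn.closure (hI : IsIdealIn W Set.univ I) : IsIdealIn W Set.univ (closure I) := by
  obtain ⟨-, h_zero, h_add, h_neg, -⟩ := id hI
  refine ⟨Set.subset_univ _, subset_closure h_zero, fun x hx y hy => ?_, fun x hx => ?_,
    fun x hx b _ => ⟨?_, ?_⟩⟩
  · exact map_mem_closure₂ continuous_add hx hy h_add
  · exact map_mem_closure continuous_neg hx h_neg
  · exact map_mem_closure (f := fun x => x * b) (by fun_prop) hx fun _ => hI.mul_mem_right b
  · exact map_mem_closure (f := fun x => b * x) (by fun_prop) hx fun _ => hI.mul_mem_left b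

variable (SB : Stabilization A W) (hsimple : IsSimpleCStar A) (hI : IsIdealIn W Set.univ I)
  (h_closed : IsClosed I)
include SB hsimple hI h_closed

lemma Stabilization.emb_mem_of_emb_mem {i l : ℕ} {c : A} (hc : c ≠ 0) (hcI : SB.emb i l c ∈ I)
    (d : A) : SB.emb i l d ∈ I := by
  let J : TwoSidedIdeal A := TwoSidedIdeal.mk' (SB.emb i l ⁻¹' I)
    (by simpa using hI.2.1)
    (fun {a b} ha hb => by simpa using hI.2.2.1 _ ha _ hb)
    (fun {a} ha => by simpa using hI.2.2.2.1 _ ha)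
    (fun {a b} hb => by simpa [SB.emb_mul] using hI.mul_mem_left (SB.emb i i a) hb)
    (fun {a b} ha => by simpa [SB.emb_mul] using hI.mul_mem_right (SB.emb l l b) ha)
  have hJ : (J : Set A) = SB.emb i l ⁻¹' I := TwoSidedIdeal.coe_mk' _ _ _ _ _ _
  have hJ_closed : IsClosed (J : Set A) :=
    hJ ▸ h_closed.preimage (SB.isometry_emb i l).continuous
  rcases hsimple.2 J hJ_closed with h | h <;> rw [hJ] at h
  · exact absurd (h.subset hcI) hc
  · exact h.superset (Set.mem_univ d)

-- Only `A` is assumed simple: a nonzero corner of the ideal is spread to all matrix entries.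
theorem Stabilization.eq_univ_of_isIdealIn {x : W} (hx : x ∈ I) (hx0 : x ≠ 0) : I = Set.univ := by
  obtain ⟨i, j, a, h_left⟩ := SB.exists_emb_mul_ne_zero hx0
  obtain ⟨k, l, b, h_right⟩ := SB.exists_mul_emb_ne_zero h_left
  obtain ⟨c, hc⟩ := SB.emb_mul_mul_emb_mem_range i j k l a b x
  have hcI : SB.emb i l c ∈ I := hc ▸ hI.mul_mem_right _ (hI.mul_mem_left _ hx)
  have hc0 : c ≠ 0 := fun h => h_right (by rw [← hc, h, map_zero])
  have hccc : star c * c * star c ≠ 0 := fun h => hc0 <| by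
    rw [← CStarRing.star_mul_self_eq_zero_iff, ← CStarRing.star_mul_self_eq_zero_iff, star_mul,
      star_star, ← mul_assoc, h, zero_mul]
  refine Set.eq_univ_of_forall fun w => ?_
  induction w using SB.induction_on with
  | isClosed => exact h_closed
  | emb m n d =>
    refine SB.emb_mem_of_emb_mem hsimple hI h_closed hccc ?_ d
    simpa [SB.emb_mul] using hI.mul_mem_right (SB.emb l n (star c))
      (hI.mul_mem_left (SB.emb m i (star c)) hcI)
  | add u v hu hv => exact hI.2.2.1 u hu v hv

end Ideal

end Stabilization

/-! ### The Pedersen ideal -/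

section Pedersen

lemma exists_mul_eq_sub_of_norm_lt_one {B : Type*} [NonUnitalCStarAlgebra B] {d : B}
    (hd : ‖d‖ < 1) : ∃ r : B, d * r = r - d := by
  have h_reg : IsQuasiregular (-d) := by
    by_contra h
    have h_mem := quasispectrum.mem_of_not_quasiregular (R := NNReal) (r := 1) d (by simpa using h)
    exact hd.not_ge (CStarAlgebra.le_nnnorm_of_mem_quasispectrum h_mem)
  obtain ⟨r, hr, -⟩ := isQuasiregular_iff.mp h_reg
  exact ⟨r, (sub_eq_zero.mp (by simpa [sub_eq_add_neg] using hr)).symm⟩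

lemma mem_pedersen_of_mul_eq_self {B : Type*} [NonUnitalCStarAlgebra B] {f g : B}
    (h : f * g = f) : f ∈ pedersen B := by
  refine Set.mem_iInter₂.mpr fun I ⟨hI, h_dense⟩ => ?_
  obtain ⟨y, hy, hgy⟩ := Metric.mem_closure_iff.mp (h_dense (Set.mem_univ g)) 1 one_pos
  obtain ⟨r, hr⟩ := exists_mul_eq_sub_of_norm_lt_one (dist_eq_norm g y ▸ hgy)
  have h_eq : f = f * y + f * y * r := by
    have h_mul := congrArg (f * ·) hr
    simp only [mul_sub, sub_mul, ← mul_assoc, h] at h_mul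
    grind
  have hfy := hI.mul_mem_left f hy
  exact h_eq ▸ hI.2.2.1 _ hfy _ (hI.mul_mem_right r hfy)

variable {a b : W} {s t δ : ℝ}

lemma cfcₙ_mem_pedersen (ha : 0 ≤ a) {F : ℝ → ℝ} (hs : 0 < s) (hF_zero : ∀ x ≤ s, F x = 0)
    (hF : Continuous F := by fun_prop) : cfcₙ F a ∈ pedersen W := by
  refine mem_pedersen_of_mul_eq_self (g := fEps s a) <|
    cfcₙ_mul_cfcₙ ha (fun x _ => ?_) (hf0 := hF_zero 0 hs.le)
  rcases le_total x s with h | h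
  · rw [hF_zero x h, zero_mul]
  · rw [cutoff_of_le hs h, mul_one]

lemma fEps_mem_pedersen (ha : 0 ≤ a) (hδ : 0 < δ) : fEps δ a ∈ pedersen W :=
  cfcₙ_mem_pedersen ha (half_pos hδ) fun _ => cutoff_of_le_half hδ

lemma dTau_cut_lt_top (τ : QuasiTrace W) (ha : 0 ≤ a) (ht : 0 < t) : dTau τ (cut t a) < ∞ :=
  (dTau_cut_le_toFun_cfcₙ τ ha ht.le (fun _ _ => cutoff_nonneg t _)
    fun _ hx => (cutoff_of_le ht hx).ge).trans_lt
    (τ.finite_on_pedersen _ (fEps_mem_pedersen ha ht) (fEps_nonneg t ha))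

lemma QuasiTrace.continuous_toFun {B : Type*} [NonUnitalCStarAlgebra B] [PartialOrder B]
    {p : B} (hp : p ∈ pedersen B) : Continuous fun τ : QuasiTrace B => τ.toFun p :=
  (continuous_apply (A := fun _ : pedersen B => ℝ≥0∞) ⟨p, hp⟩).comp
    (continuous_induced_dom (f := fun τ : QuasiTrace B => fun a : pedersen B => τ.toFun a))

end Pedersen

/-! ### Null elements and uniform bounds -/

section Faithful

variable (τ : QuasiTrace W) {a e : W}

lemma dTau_eq_zero_of_toFun_eq_zero (ha : 0 ≤ a) (h : τ.toFun a = 0) : dTau τ a = 0 := by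
  refine nonpos_iff_eq_zero.mp <| iSup_le fun n => ?_
  have hn : (0 : ℝ) < 1 / (n + 1) := by positivity
  set δ : ℝ := 1 / (n + 1)
  have h_smul : cfcₙ (fun x => 2 / δ * x) a = (2 / δ) • a := by
    rw [cfcₙ_const_mul_id (2 / δ) a]
  calc τ.toFun (fEps δ a) ≤ τ.toFun ((2 / δ) • a) := by
        rw [← h_smul]
        refine τ.toFun_cfcₙ_le ha (fun x _ => cutoff_nonneg δ x) fun x hx => ?_
        refine (min_le_right _ _).trans (max_le (by positivity) ?_)
        linarith [mul_div_right_comm 2 x δ]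
    _ = 0 := by rw [τ.map_smul _ _ (by positivity) ha, h, mul_zero]

lemma QuasiTrace.toFun_eq_zero_of_dTau_eq_zero (ha : 0 ≤ a) (h : dTau τ a = 0) :
    τ.toFun a = 0 := by
  refine nonpos_iff_eq_zero.mp <|
    τ.toFun_le_of_tendsto (fun n => cut_nonneg _ ha) ha (tendsto_cut ha) fun n => ?_
  have hn : (0 : ℝ) < 1 / (n + 1) := by positivity
  set s : ℝ := 1 / (n + 1)
  have h_zero : τ.toFun (fEps s a) = 0 :=
    nonpos_iff_eq_zero.mp (h ▸ τ.toFun_fEps_le_dTau ha hn)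
  have h_smul : cfcₙ (fun x => (‖a‖ + 1) * cutoff s x) a = (‖a‖ + 1) • fEps s a := by
    rw [cfcₙ_const_mul (‖a‖ + 1) (cutoff s) a, fEps]
  have h_cut : cut s a = cfcₙ (fun x => min (‖a‖ + 1) (max (x - s) 0)) a :=
    cfcₙ_congr fun x hx => (min_eq_right <| max_le
      (by linarith [le_norm_of_mem_quasispectrum ha hx]) (by positivity)).symm
  calc τ.toFun (cut s a) ≤ τ.toFun ((‖a‖ + 1) • fEps s a) := by
        rw [← h_smul, h_cut]
        refine τ.toFun_cfcₙ_le ha (fun x _ => by positivity) (fun x _ => ?_)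
          (hF0 := by rw [max_eq_right (by linarith), min_eq_right (by positivity)])
        rcases le_total x s with hxs | hxs
        · rw [max_eq_right (by linarith), min_eq_right (by positivity)]
          exact mul_nonneg (by positivity) (cutoff_nonneg s x)
        · rw [cutoff_of_le hn hxs, mul_one]
          exact min_le_left _ _
    _ ≤ 0 := by rw [τ.map_smul _ _ (by positivity) (fEps_nonneg s ha), h_zero, mul_zero]

lemma dTau_le_dTau_mul_self (he : 0 ≤ e) : dTau τ e ≤ dTau τ (e * e) := by
  refine dTau_le_of_forall_cut_le τ he fun n => ?_
  have hn : (0 : ℝ) < 1 / (n + 1) := by positivity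
  set t : ℝ := 1 / (n + 1)
  have h_sq : cfcₙ (fun x : ℝ => t⁻¹ * (x * x)) e = t⁻¹ • (e * e) := by
    rw [cfcₙ_const_mul t⁻¹ (fun x : ℝ => x * x) e, ← self_mul_cfcₙ (.of_nonneg he),
      cfcₙ_id' ℝ e]
  refine dTau_le_of_le_smul τ (cut_nonneg t he) (IsSelfAdjoint.of_nonneg he).mul_self_nonneg
    (inv_nonneg.mpr hn.le) ?_
  rw [← h_sq]
  refine cfcₙ_le_cfcₙ he (fun x hx => ?_) (hf0 := by simp [hn.le])
  rw [max_le_iff, inv_mul_eq_div, le_div_iff₀ hn]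
  exact ⟨by nlinarith [sq_nonneg (x - t)], by positivity⟩

lemma IsOrthogonalIsometryFamily.isIdealIn_setOf_dTau_mem {L : ℕ → W → W}
    (hL : IsOrthogonalIsometryFamily L) {F : Set (QuasiTrace W → ℝ≥0∞)} (hF : IsLowerSet F)
    (hF_zero : 0 ∈ F) (hF_add : ∀ f ∈ F, ∀ g ∈ F, f + g ∈ F) :
    IsIdealIn W Set.univ {x | (fun τ => dTau τ (star x * x)) ∈ F} := by
  refine ⟨Set.subset_univ _, ?_, fun x hx y hy => ?_, fun x hx => ?_, fun x hx b _ => ⟨?_, ?_⟩⟩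
  · simpa [Pi.zero_def] using hF_zero
  · exact hF (fun τ => hL.dTau_star_add_mul_add_le τ x y) (hF_add _ hx _ hy)
  · simpa using hx
  · exact hF (fun τ => dTau_star_mul_self_mul_right_le τ x b) hx
  · exact hF (fun τ => dTau_star_mul_self_mul_left_le τ x b) hx

variable {τ} in
theorem Stabilization.eq_zero_of_dTau_eq_zero {A : Type*} [NonUnitalCStarAlgebra A]
    (SB : Stabilization A W) (hsimple : IsSimpleCStar A) (hτ : ¬ τ.IsZero) (ha : 0 ≤ a)
    (h : dTau τ a = 0) : a = 0 := by
  obtain ⟨L, hL⟩ := SB.exists_isOrthogonalIsometryFamily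
  by_contra ha0
  have h_ideal := hL.isIdealIn_setOf_dTau_mem (F := {f | f τ = 0})
    (fun f g hgf hf => nonpos_iff_eq_zero.mp ((hgf τ).trans_eq hf)) rfl
    fun f hf g hg => by simpa using And.intro hf hg
  have h_closed : IsClosed {x : W | dTau τ (star x * x) = 0} :=
    IsSeqClosed.isClosed fun u x hu hux => nonpos_iff_eq_zero.mp <|
      dTau_le_of_tendsto τ (fun n => star_mul_self_nonneg (u n)) (star_mul_self_nonneg x)
        (hux.star.mul hux) fun n => (hu n).le
  have h_univ := SB.eq_univ_of_isIdealIn hsimple h_ideal h_closed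
    (x := CFC.sqrt a) (by simpa [star_sqrt_mul_sqrt ha] using h)
    fun h_sqrt => ha0 (by rw [← star_sqrt_mul_sqrt ha, h_sqrt, mul_zero])
  refine hτ fun b => ?_
  by_cases hb : 0 ≤ b
  · have hb_mem := h_univ.superset (Set.mem_univ (CFC.sqrt b))
    exact τ.toFun_eq_zero_of_dTau_eq_zero hb (by simpa [star_sqrt_mul_sqrt hb] using hb_mem)
  · exact τ.zero_of_not_nonneg b hb

end Faithful

namespace Stabilization

variable (SB : Stabilization A W)

/-- The corner embedding `a ↦ a ⊗ e₁₁`, over `ℝ` so that it commutes with the real continuous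
functional calculus. -/
def embHom {A W : Type*} [NonUnitalCStarAlgebra A] [NonUnitalCStarAlgebra W]
    (SB : Stabilization A W) : A →⋆ₙₐ[ℝ] W where
  toFun := SB.emb 0 0
  map_smul' r a := by simp [← Complex.coe_smul]
  map_zero' := map_zero _
  map_add' := map_add _
  map_mul' a b := by rw [SB.emb_mul, if_pos rfl]
  map_star' a := by rw [SB.emb_star]

lemma fEps_emb {W : Type*} [NonUnitalCStarAlgebra W] (SB : Stabilization A W) (δ : ℝ) {b : A}
    (hb : 0 ≤ b) : fEps δ (SB.emb 0 0 b) = SB.emb 0 0 (fEps δ b) := by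
  have hb' : IsSelfAdjoint b := .of_nonneg hb
  exact (SB.embHom.map_cfcₙ (cutoff δ) b (by fun_prop) (by simp) (SB.isometry_emb 0 0).continuous
    hb' (hb'.map SB.embHom)).symm

lemma dTau_emb_le_one {b : A} (hb : 0 ≤ b) {τ : QuasiTrace W} (hτ : τ ∈ closure (QTSet SB)) :
    dTau τ (SB.emb 0 0 b) ≤ 1 := by
  refine iSup_le fun n => ?_
  have hb' : 0 ≤ SB.emb 0 0 b := map_nonneg SB.embHom hb
  have h_closed := isClosed_le
    (QuasiTrace.continuous_toFun (fEps_mem_pedersen hb' (Nat.one_div_pos_of_nat (n := n))))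
    (continuous_const (y := (1 : ℝ≥0∞)))
  refine closure_minimal (fun σ (hσ : _ = _) => ?_) h_closed hτ
  change σ.toFun _ ≤ 1
  rw [SB.fEps_emb _ hb, ← hσ]
  exact le_iSup (fun a : {a : A // 0 ≤ a ∧ ‖a‖ ≤ 1} => σ.toFun (SB.emb 0 0 a))
    ⟨_, fEps_nonneg _ hb, norm_fEps_le_one _ hb⟩

theorem exists_forall_dTau_le_of_mem_pedersen (hsimple : IsSimpleCStar A) {e : W} (he : 0 ≤ e)
    (hePed : e ∈ pedersen W) : ∃ M : ℝ≥0∞, M ≠ ∞ ∧ ∀ τ ∈ closure (QTSet SB), dTau τ e ≤ M := by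
  obtain ⟨L, hL⟩ := SB.exists_isOrthogonalIsometryFamily
  let F : Set (QuasiTrace W → ℝ≥0∞) :=
    {f | ∃ M : ℝ≥0∞, M ≠ ∞ ∧ ∀ τ ∈ closure (QTSet SB), f τ ≤ M}
  have h_ideal := hL.isIdealIn_setOf_dTau_mem (F := F)
    (fun f g hgf ⟨M, hM, hf⟩ => ⟨M, hM, fun τ hτ => (hgf τ).trans (hf τ hτ)⟩)
    ⟨0, ENNReal.zero_ne_top, fun _ _ => le_rfl⟩
    fun f ⟨M, hM, hf⟩ g ⟨N, hN, hg⟩ =>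
      ⟨M + N, ENNReal.add_ne_top.mpr ⟨hM, hN⟩, fun τ hτ => add_le_add (hf τ hτ) (hg τ hτ)⟩
  obtain ⟨a, ha⟩ := hsimple.1
  have h_univ := SB.eq_univ_of_isIdealIn hsimple h_ideal.closure isClosed_closure
    (x := SB.emb 0 0 a)
    (subset_closure ⟨1, ENNReal.one_ne_top, fun τ hτ => by
      simpa [SB.emb_star, SB.emb_mul] using SB.dTau_emb_le_one (star_mul_self_nonneg a) hτ⟩)
    fun h => ha <| by rwa [← norm_eq_zero, ← SB.norm_emb 0 0 a, norm_eq_zero]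
  obtain ⟨M, hM, h⟩ := Set.mem_iInter₂.mp hePed _ ⟨h_ideal, h_univ.superset⟩
  refine ⟨M, hM, fun τ hτ => (dTau_le_dTau_mul_self τ he).trans ?_⟩
  simpa only [(IsSelfAdjoint.of_nonneg he).star_eq] using h τ hτ

end Stabilization

/-! ### Division in the Cuntz semigroup -/

section Division

variable {a : W} {κ : ℝ≥0∞}

namespace Stabilization

variable {A : Type*} [NonUnitalCStarAlgebra A] (SB : Stabilization A W)
  (hsimple : IsSimpleCStar A)
include SB hsimple

lemma memAffPlus_const_mul_toFun (hκ0 : κ ≠ 0) (hκ : κ ≠ ∞) (ha : 0 ≤ a) (haPed : a ∈ pedersen W) :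
    MemAffPlus W fun τ => κ * τ.toFun a := by
  rcases eq_or_ne a 0 with rfl | ha0
  · exact .inl fun τ => by simp only [τ.map_zero, mul_zero]
  refine .inr ⟨(ENNReal.continuous_const_mul hκ).comp (QuasiTrace.continuous_toFun haPed),
    fun t _ _ τ σ ρ h => ?_,
    fun τ => ENNReal.mul_lt_top hκ.lt_top (τ.finite_on_pedersen a haPed ha),
    fun τ hτ => ?_, fun τ hτ => by simp only [hτ a, mul_zero]⟩
  · simp only [h a ha]
    ring
  · exact pos_iff_ne_zero.mpr <| mul_ne_zero hκ0 fun h =>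
      ha0 (SB.eq_zero_of_dTau_eq_zero hsimple hτ ha (dTau_eq_zero_of_toFun_eq_zero τ ha h))

lemma memLAffPlus_const_mul_dTau (hκ0 : κ ≠ 0) (hκ : κ ≠ ∞) (ha : 0 ≤ a) :
    MemLAffPlus W fun τ => κ * dTau τ a :=
  ⟨fun m τ => κ * τ.toFun (fEps (1 / (m + 1)) a),
    fun _ => SB.memAffPlus_const_mul_toFun hsimple hκ0 hκ (fEps_nonneg _ ha)
      (fEps_mem_pedersen ha (by positivity)),
    fun m τ => mul_le_mul_right (τ.monotone_toFun_fEps ha m.le_succ) κ,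
    fun _ => ENNReal.mul_iSup ..⟩

lemma exists_natCast_mul_dTau_eq (hΓ : GammaSurjective W) {n : ℕ} (hn : n ≠ 0) (ha : 0 ≤ a) :
    ∃ x : W, 0 ≤ x ∧ ∀ τ : QuasiTrace W, n * dTau τ x = dTau τ a := by
  have hn0 : (n : ℝ≥0∞) ≠ 0 := Nat.cast_ne_zero.mpr hn
  have hn_top : (n : ℝ≥0∞) ≠ ∞ := ENNReal.natCast_ne_top n
  obtain ⟨x, hx, h⟩ := hΓ _ <| SB.memLAffPlus_const_mul_dTau hsimple (κ := (n : ℝ≥0∞)⁻¹)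
    (ENNReal.inv_ne_zero.mpr hn_top) (ENNReal.inv_ne_top.mpr hn0) ha
  exact ⟨x, hx, fun τ => by rw [h τ, ENNReal.mul_inv_cancel_left hn0 hn_top]⟩

end Stabilization

end Division

section Staircase

variable {L : ℕ → W → W} (hL : IsOrthogonalIsometryFamily L) (τ : QuasiTrace W) {c : W} {δ : ℝ}

/-- The orthogonal sum of the cut-downs `(c - δ)₊, (c - 2δ)₊, …, (c - nδ)₊`. Cutting it down by `δ`
shifts every step, so that its rank drops by at most the rank of the first step. -/
def staircase (L : ℕ → W → W) (δ : ℝ) (n : ℕ) (c : W) : W :=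
  ∑ k ∈ Finset.range n, orthCopy L k (cut ((k + 1) * δ) c)

lemma staircase_nonneg (L : ℕ → W → W) (δ : ℝ) (n : ℕ) (c : W) : 0 ≤ staircase L δ n c :=
  Finset.sum_nonneg fun _ _ => orthCopy_nonneg L _ _

include hL in
lemma IsOrthogonalIsometryFamily.dTau_staircase (hc : 0 ≤ c) (n : ℕ) :
    dTau τ (staircase L δ n c) = ∑ k ∈ Finset.range n, dTau τ (cut ((k + 1) * δ) c) :=
  hL.dTau_sum_orthCopy τ _ fun _ => cut_nonneg _ hc

include hL in
lemma IsOrthogonalIsometryFamily.dTau_cut_staircase (hδ : 0 ≤ δ) (hc : 0 ≤ c) (n : ℕ) :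
    dTau τ (cut δ (staircase L δ n c)) =
      ∑ k ∈ Finset.range n, dTau τ (cut (((k + 1 : ℕ) + 1) * δ) c) := by
  rw [staircase, hL.dTau_cut_sum_orthCopy τ _ (fun _ => cut_nonneg _ hc) hδ]
  refine Finset.sum_congr rfl fun k _ => ?_
  rw [cut_cut hδ (by positivity) hc, Nat.cast_succ]
  congr 2
  ring

lemma antitone_dTau_cut_mul (hδ : 0 ≤ δ) (hc : 0 ≤ c) :
    Antitone fun k : ℕ => dTau τ (cut ((k + 1) * δ) c) :=
  fun _ _ h => dTau_cut_antitone τ hc (by positivity) (by gcongr)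

include hL in
lemma IsOrthogonalIsometryFamily.dTau_staircase_le (hδ : 0 ≤ δ) (hc : 0 ≤ c) (n : ℕ) :
    dTau τ (staircase L δ n c) ≤ n * dTau τ (cut δ c) := by
  have h := Finset.sum_le_card_nsmul (Finset.range n) (fun k : ℕ => dTau τ (cut ((k + 1) * δ) c)) _
    fun k _ => antitone_dTau_cut_mul τ hδ hc k.zero_le
  simpa [hL.dTau_staircase τ hc] using h

end Staircase

section ENNRealEstimates

variable {d : ℕ → ℝ≥0∞} {M η x y : ℝ≥0∞} {N : ℕ}

lemma le_add_of_mul_eq_sum_of_antitone (hd : Antitone d) (hdM : d 0 ≤ M) (hN : M ≤ N * η)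
    (hx : (N + 1 : ℕ) * x = ∑ k ∈ Finset.range N, d k) : d N ≤ x + η := by
  have h_card : N * d N ≤ ∑ k ∈ Finset.range N, d k := by
    simpa using Finset.card_nsmul_le_sum (Finset.range N) d (d N)
      fun k hk => hd (Finset.mem_range.mp hk).le
  refine (ENNReal.mul_le_mul_iff_right (a := (N + 1 : ℕ)) (by simp) (by simp)).mp ?_
  calc (N + 1 : ℕ) * d N = N * d N + d N := by push_cast; ring
    _ ≤ (N + 1 : ℕ) * x + (N + 1 : ℕ) * η := by
      rw [hx]
      gcongr
      grw [hd N.zero_le, hdM, hN]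
      gcongr
      lia
    _ = (N + 1 : ℕ) * (x + η) := by ring

lemma le_add_of_mul_eq_sum_of_sum_succ_le (hdM : d 0 ≤ M) (hN : 2 * M ≤ N * η)
    (hx : (N + 1 : ℕ) * x = ∑ k ∈ Finset.range N, d k) (hxM : x ≤ M)
    (hy : ∑ k ∈ Finset.range N, d (k + 1) ≤ (N + 2 : ℕ) * y) : x ≤ y + η := by
  have h_shift : ∑ k ∈ Finset.range N, d k ≤ ∑ k ∈ Finset.range N, d (k + 1) + d 0 := by
    rw [← Finset.sum_range_succ']
    exact Finset.sum_le_sum_of_subset (Finset.range_subset_range.mpr N.le_succ)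
  refine (ENNReal.mul_le_mul_iff_right (a := (N + 2 : ℕ)) (by simp) (by simp)).mp ?_
  calc (N + 2 : ℕ) * x = ∑ k ∈ Finset.range N, d k + x := by rw [← hx]; push_cast; ring
    _ ≤ ((N + 2 : ℕ) * y + M) + M := by grw [h_shift, hy, hdM, hxM]
    _ = (N + 2 : ℕ) * y + 2 * M := by ring
    _ ≤ (N + 2 : ℕ) * y + (N + 2 : ℕ) * η := by
      grw [hN]
      gcongr
      lia
    _ = (N + 2 : ℕ) * (y + η) := by ring

end ENNRealEstimates

section Approximation

variable {c x z : W} {δ s t : ℝ}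

lemma exists_mem_her_dTau_cut_le_of_cuntzLE (hc : 0 ≤ c) (hx : 0 ≤ x) (h : CuntzLE x c)
    (hs : 0 < s) : ∃ p ∈ her c, 0 ≤ p ∧ ∃ r > 0, ∀ τ : QuasiTrace W,
      dTau τ p ≤ dTau τ x ∧ dTau τ (cut s x) ≤ dTau τ (cut r p) := by
  obtain ⟨y, hy⟩ := h
  obtain ⟨n, hn⟩ := (hy.eventually_lt_const (by positivity : 0 < s / 3)).exists
  set r := s / 3 with hr_def
  have hr : 0 < r := by positivity
  set q := CFC.sqrt c * y n with hq
  have hqq : star q * q = star (y n) * c * y n := by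
    rw [hq, star_mul, ← mul_assoc, mul_assoc (star _), star_sqrt_mul_sqrt hc]
  have hq_her : q * star q ∈ her c := by
    convert mul_mul_mem_her (sqrt_mem_her hc) (sqrt_mem_her hc) (y n * star (y n)) using 1
    rw [hq, star_mul, (isSelfAdjoint_sqrt c).star_eq]
    noncomm_ring
  have hb := star_mul_self_nonneg q
  refine ⟨cut r (q * star q), her_subset_her hq_her (cfcₙ_mem_her (mul_star_self_nonneg q)
    (hf0 := by simpa using hr.le)), cut_nonneg r (mul_star_self_nonneg q), r, hr, fun τ => ?_⟩
  rw [cut_cut hr.le hr.le (mul_star_self_nonneg q), ← dTau_cut_star_mul_self τ hr.le,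
    ← dTau_cut_star_mul_self τ (by positivity)]
  exact ⟨dTau_cut_le_of_norm_sub_lt τ hb hx (by rwa [norm_sub_rev, hqq]),
    dTau_cut_le_dTau_cut_of_norm_sub_add_lt τ hx hb (by positivity) (by rw [hqq]; linarith)⟩

lemma cuntzLE_sum_orthCopy_of_mul_dTau_eq {L : ℕ → W → W} (hL : IsOrthogonalIsometryFamily L)
    (hsc : StrictComparison W) (hx : 0 ≤ x) (hz : 0 ≤ z) {n : ℕ}
    (h : ∀ τ : QuasiTrace W, n * dTau τ x = dTau τ z)
    (hz_pos : ∀ τ : QuasiTrace W, ¬ τ.IsZero → dTau τ z ≠ 0)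
    (hz_top : ∀ τ : QuasiTrace W, dTau τ z ≠ ∞) :
    CuntzLE z (∑ k ∈ Finset.range (n + 1), orthCopy L k x) := by
  refine hsc _ _ hz (Finset.sum_nonneg fun _ _ => orthCopy_nonneg L _ _) fun τ hτ => ?_
  have hx0 : dTau τ x ≠ 0 := fun h0 => hz_pos τ hτ (by rw [← h τ, h0, mul_zero])
  rw [hL.dTau_sum_orthCopy τ _ fun _ => hx, Finset.sum_range_succ, Finset.sum_const,
    Finset.card_range, nsmul_eq_mul, h τ]
  exact ENNReal.lt_add_right (hz_top τ) hx0

lemma exists_mul_dTau_eq_dTau_staircase {A : Type*} [NonUnitalCStarAlgebra A]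
    (SB : Stabilization A W) (hsimple : IsSimpleCStar A) (hsc : StrictComparison W)
    (hΓ : GammaSurjective W) {L : ℕ → W → W} (hL : IsOrthogonalIsometryFamily L) (hc : 0 ≤ c)
    (hδ : 0 < δ) (hcδ : cut δ c ≠ 0) {N : ℕ} (hN : N ≠ 0) :
    ∃ x : W, 0 ≤ x ∧ CuntzLE x c ∧
      (∀ τ : QuasiTrace W, (N + 1 : ℕ) * dTau τ x = dTau τ (staircase L δ N c)) ∧
      ∃ s > 0, ∀ τ : QuasiTrace W,
        dTau τ (cut δ (staircase L δ N c)) ≤ (N + 2 : ℕ) * dTau τ (cut s x) := by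
  set z := staircase L δ N c
  have hz : 0 ≤ z := staircase_nonneg L δ N c
  have h_pos {τ : QuasiTrace W} (hτ : ¬ τ.IsZero) : dTau τ (cut δ c) ≠ 0 := fun h =>
    hcδ (SB.eq_zero_of_dTau_eq_zero hsimple hτ (cut_nonneg δ hc) h)
  have h_top (τ : QuasiTrace W) : dTau τ (cut δ c) ≠ ∞ := (dTau_cut_lt_top τ hc hδ).ne
  have hz_le (τ : QuasiTrace W) : dTau τ z ≤ N * dTau τ (cut δ c) :=
    hL.dTau_staircase_le τ hδ.le hc N
  have hz_pos (τ : QuasiTrace W) (hτ : ¬ τ.IsZero) : dTau τ z ≠ 0 := fun h => by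
    rw [hL.dTau_staircase τ hc, Finset.sum_eq_zero_iff] at h
    exact h_pos hτ (by simpa using h 0 (Finset.mem_range.mpr (Nat.pos_of_ne_zero hN)))
  have hz_top (τ : QuasiTrace W) : dTau τ z ≠ ∞ :=
    ne_top_of_le_ne_top (ENNReal.mul_ne_top (ENNReal.natCast_ne_top N) (h_top τ)) (hz_le τ)
  obtain ⟨x, hx, hxz⟩ := SB.exists_natCast_mul_dTau_eq hsimple hΓ N.succ_ne_zero hz
  have hxc : CuntzLE x c := hsc x c hx hc fun τ hτ => by
    refine lt_of_lt_of_le ?_ (dTau_cut_le τ hc hδ.le)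
    refine lt_of_mul_lt_mul_left' (a := ((N + 1 : ℕ) : ℝ≥0∞)) ?_
    rw [hxz τ, Nat.cast_succ, add_mul, one_mul]
    exact (hz_le τ).trans_lt <| ENNReal.lt_add_right
      (ENNReal.mul_ne_top (ENNReal.natCast_ne_top N) (h_top τ)) (h_pos hτ)
  obtain ⟨s, hs, h_cut⟩ := exists_dTau_cut_le_of_cuntzLE hz
    (Finset.sum_nonneg fun _ _ => orthCopy_nonneg L _ _)
    (cuntzLE_sum_orthCopy_of_mul_dTau_eq hL hsc hx hz hxz hz_pos hz_top) hδ
  refine ⟨x, hx, hxc, hxz, s, hs, fun τ => (h_cut τ).trans_eq ?_⟩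
  rw [hL.dTau_cut_sum_orthCopy τ _ (fun _ => hx) hs.le, Finset.sum_const, Finset.card_range,
    nsmul_eq_mul]

variable {A : Type*} [NonUnitalCStarAlgebra A] (SB : Stabilization A W)
  (hsimple : IsSimpleCStar A) (hsc : StrictComparison W) (hΓ : GammaSurjective W)
  {S : Set (QuasiTrace W)} {M η : ℝ≥0∞}
include SB hsimple hsc hΓ

lemma exists_cuntzLE_dTau_le_dTau_cut_add (hM : M ≠ ∞) (hc : 0 ≤ c)
    (hcM : ∀ τ ∈ S, dTau τ c ≤ M) (ht : 0 < t) (hη : η ≠ 0) :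
    ∃ x : W, 0 ≤ x ∧ CuntzLE x c ∧ ∃ s > 0, ∀ τ ∈ S,
      dTau τ (cut t c) ≤ dTau τ x + η ∧ dTau τ x ≤ dTau τ (cut s x) + η := by
  by_cases hct : cut t c = 0
  · refine ⟨0, le_rfl, cuntzLE_of_le_smul le_rfl hc zero_le_one (by simpa using hc), 1, one_pos,
      fun τ _ => ⟨?_, ?_⟩⟩ <;> simp [hct]
  obtain ⟨L, hL⟩ := SB.exists_isOrthogonalIsometryFamily
  obtain ⟨N, hN⟩ :=
    ENNReal.exists_nat_mul_gt hη (ENNReal.mul_ne_top ENNReal.ofNat_ne_top hM : 2 * M ≠ ∞)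
  have hN0 : N ≠ 0 := by rintro rfl; simp at hN
  set δ := t / (N + 1)
  have hδ : 0 < δ := by positivity
  have h_last : ((N : ℝ) + 1) * δ = t := mul_div_cancel₀ _ (by positivity)
  have hcδ : cut δ c ≠ 0 := fun h => hct <| by
    rw [← h_last, add_mul, one_mul, ← cut_cut (by positivity) hδ.le hc, h]
    simp [cut]
  obtain ⟨x, hx, hxc, hxz, s, hs, h_cut⟩ :=
    exists_mul_dTau_eq_dTau_staircase SB hsimple hsc hΓ hL hc hδ hcδ hN0
  refine ⟨x, hx, hxc, s, hs, fun τ hτ => ?_⟩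
  have h_first : dTau τ (cut (((0 : ℕ) + 1) * δ) c) ≤ M :=
    (dTau_cut_le τ hc (by positivity)).trans (hcM τ hτ)
  have hxd := (hxz τ).trans (hL.dTau_staircase τ hc N)
  have hxM : dTau τ x ≤ M := (dTau_le_of_cuntzLE τ hx hc hxc).trans (hcM τ hτ)
  refine ⟨?_, le_add_of_mul_eq_sum_of_sum_succ_le h_first hN.le hxd hxM
    ((hL.dTau_cut_staircase τ hδ.le hc N).symm.trans_le (h_cut τ))⟩
  have h_le : M ≤ N * η := (le_mul_of_one_le_left' one_le_two).trans hN.le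
  simpa only [h_last] using
    le_add_of_mul_eq_sum_of_antitone (antitone_dTau_cut_mul τ hδ.le hc) h_first h_le hxd

theorem exists_mem_her_dTau_le_dTau_cut_add (hM : M ≠ ∞) (hc : 0 ≤ c)
    (hcM : ∀ τ ∈ S, dTau τ c ≤ M) (ht : 0 < t) (hη : η ≠ 0) :
    ∃ p ∈ her c, 0 ≤ p ∧ ∃ r > 0, ∀ τ ∈ S,
      dTau τ (cut t c) ≤ dTau τ p + 2 * η ∧ dTau τ p ≤ dTau τ (cut r p) + η := by
  obtain ⟨x, hx, hxc, s, hs, h⟩ :=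
    exists_cuntzLE_dTau_le_dTau_cut_add SB hsimple hsc hΓ hM hc hcM ht hη
  obtain ⟨p, hpc, hp, r, hr, hpx⟩ := exists_mem_her_dTau_cut_le_of_cuntzLE hc hx hxc hs
  refine ⟨p, hpc, hp, r, hr, fun τ hτ => ⟨?_, ?_⟩⟩
  · calc dTau τ (cut t c) ≤ dTau τ x + η := (h τ hτ).1
      _ ≤ (dTau τ (cut s x) + η) + η := by grw [(h τ hτ).2]
      _ ≤ (dTau τ p + η) + η := by grw [(hpx τ).2, dTau_cut_le τ hp hr.le]
      _ = dTau τ p + 2 * η := by ring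
  · calc dTau τ p ≤ dTau τ x := (hpx τ).1
      _ ≤ dTau τ (cut s x) + η := (h τ hτ).2
      _ ≤ dTau τ (cut r p) + η := by grw [(hpx τ).2]

end Approximation

/-! ### Exhaustion by orthogonal elements -/

section Remainder

/-- The part `(1 - f) c (1 - f)` of a positive element `c` left over by a positive contraction `f`,
written as `x*x` with `x = √c (1 - f)` so that it is visibly positive. -/
def remainder (c f : W) : W :=
  star (CFC.sqrt c - CFC.sqrt c * f) * (CFC.sqrt c - CFC.sqrt c * f)

variable {c f P : W}

lemma remainder_nonneg (c f : W) : 0 ≤ remainder c f := star_mul_self_nonneg _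

lemma star_sqrt_sub_sqrt_mul (hf : IsSelfAdjoint f) :
    star (CFC.sqrt c - CFC.sqrt c * f) = CFC.sqrt c - f * CFC.sqrt c := by
  rw [star_sub, star_mul, hf.star_eq, (isSelfAdjoint_sqrt c).star_eq]

lemma remainder_mem_her (hc : 0 ≤ c) (hf : IsSelfAdjoint f) (hfc : f ∈ her c) :
    remainder c f ∈ her c := by
  have h_sqrt := sqrt_mem_her hc
  rw [remainder, star_sqrt_sub_sqrt_mul hf]
  exact mul_mem_her (sub_mem_her h_sqrt (mul_mem_her hfc h_sqrt))
    (sub_mem_her h_sqrt (mul_mem_her h_sqrt hfc))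

lemma mul_remainder_eq_zero (hf : IsSelfAdjoint f) (hPf : P * f = P) :
    P * remainder c f = 0 := by
  have h : P * (CFC.sqrt c - f * CFC.sqrt c) = 0 := by
    rw [mul_sub, ← mul_assoc, hPf, sub_self]
  rw [remainder, star_sqrt_sub_sqrt_mul hf, ← mul_assoc, h, zero_mul]

lemma dTau_remainder_le (τ : QuasiTrace W) (hc : 0 ≤ c) (hf : 0 ≤ f) (hff : f * f ≤ f) :
    dTau τ (remainder c f) ≤ dTau τ c := by
  rw [remainder, dTau_star_mul_self]
  refine dTau_mono τ (mul_star_self_nonneg _) (sub_nonneg.mp ?_)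
  have h_eq : c - (CFC.sqrt c - CFC.sqrt c * f) * star (CFC.sqrt c - CFC.sqrt c * f) =
      CFC.sqrt c * (f + (f - f * f)) * CFC.sqrt c := by
    rw [star_sqrt_sub_sqrt_mul (.of_nonneg hf)]
    nth_rewrite 1 [← CFC.sqrt_mul_sqrt_self c]
    noncomm_ring
  rw [h_eq]
  exact (isSelfAdjoint_sqrt c).conjugate_nonneg (add_nonneg hf (sub_nonneg.mpr hff))

end Remainder

section ExhaustedUpTo

variable {W : Type*} [NonUnitalCStarAlgebra W] [PartialOrder W] {S : Set (QuasiTrace W)}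
  {g h : QuasiTrace W → ℝ≥0∞} {c d e : W}

/-- The dimension of `e` is exhausted by that of `c` up to the error `f`, uniformly over `S` and
at the level of cut-downs, so that errors add up under iteration. -/
def ExhaustedUpTo (S : Set (QuasiTrace W)) (f : QuasiTrace W → ℝ≥0∞) (e c : W) : Prop :=
  ∀ t > 0, ∃ s > 0, ∀ τ ∈ S, dTau τ (cut t e) ≤ f τ + dTau τ (cut s c)

namespace ExhaustedUpTo

lemma refl (S : Set (QuasiTrace W)) (e : W) : ExhaustedUpTo S 0 e e :=
  fun t ht => ⟨t, ht, fun _ _ => by simp⟩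

lemma trans (hec : ExhaustedUpTo S g e c) (hcd : ExhaustedUpTo S h c d) :
    ExhaustedUpTo S (g + h) e d := fun t ht => by
  obtain ⟨s, hs, hts⟩ := hec t ht
  obtain ⟨r, hr, hsr⟩ := hcd s hs
  refine ⟨r, hr, fun τ hτ => (hts τ hτ).trans ?_⟩
  rw [Pi.add_apply, add_assoc]
  grw [hsr τ hτ]

lemma mono (hec : ExhaustedUpTo S g e c) (hgh : ∀ τ ∈ S, g τ ≤ h τ) :
    ExhaustedUpTo S h e c := fun t ht => by
  obtain ⟨s, hs, hts⟩ := hec t ht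
  refine ⟨s, hs, fun τ hτ => (hts τ hτ).trans ?_⟩
  grw [hgh τ hτ]

end ExhaustedUpTo

end ExhaustedUpTo

section ExhaustionStep

variable {a c f : W} {r : ℝ}

lemma IsOrthogonalIsometryFamily.exhaustedUpTo_remainder {L : ℕ → W → W}
    (hL : IsOrthogonalIsometryFamily L) (S : Set (QuasiTrace W)) (hc : 0 ≤ c) (hf : 0 ≤ f)
    (hff : f * f ≤ f) : ExhaustedUpTo S (fun τ => dTau τ f) c (remainder c f) := fun t ht => by
  obtain ⟨s, hs, h⟩ := hL.exists_dTau_cut_star_add_mul_add_le (CFC.sqrt c - CFC.sqrt c * f)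
    (CFC.sqrt c * f) ht
  rw [sub_add_cancel, star_sqrt_mul_sqrt hc] at h
  have hf_sq : star f * f ≤ f := by rwa [(IsSelfAdjoint.of_nonneg hf).star_eq]
  refine ⟨s, hs, fun τ _ => (h τ).trans ?_⟩
  rw [add_comm]
  grw [dTau_cut_le τ (star_mul_self_nonneg _) hs.le, dTau_star_mul_self_mul_left_le,
    dTau_mono τ (star_mul_self_nonneg f) hf_sq]
  rfl

lemma cut_mul_fEps (hr : 0 < r) (ha : 0 ≤ a) : cut r a * fEps r a = cut r a :=
  cfcₙ_mul_cfcₙ ha (hf0 := by simpa using hr.le) fun x _ => by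
    rcases le_total r x with h | h
    · rw [cutoff_of_le hr h, mul_one]
    · rw [max_eq_right (sub_nonpos.mpr h), zero_mul]

lemma fEps_mul_fEps_le (r : ℝ) (ha : 0 ≤ a) : fEps r a * fEps r a ≤ fEps r a := by
  rw [fEps, cfcₙ_mul_cfcₙ ha fun _ _ => rfl]
  exact cfcₙ_le_cfcₙ ha fun x _ => mul_le_of_le_one_left (cutoff_nonneg r x) (cutoff_le_one r x)

lemma dTau_le_dTau_cut_half_add {p : W} {τ : QuasiTrace W} {η : ℝ≥0∞} (hp : 0 ≤ p) (hr : 0 < r)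
    (h : dTau τ p ≤ dTau τ (cut r p) + η) :
    dTau τ p ≤ dTau τ (cut (r / 2) p) + η ∧
      dTau τ (cut (r / 2) p) ≤ dTau τ (cut (r / 2) (cut (r / 2) p)) + η := by
  have hr' : 0 ≤ r / 2 := (half_pos hr).le
  rw [cut_cut hr' hr' hp, add_halves]
  refine ⟨h.trans ?_, (dTau_cut_le τ hp hr').trans h⟩
  grw [dTau_cut_antitone τ hp hr' (half_le_self hr.le)]

variable {A : Type*} [NonUnitalCStarAlgebra A] (SB : Stabilization A W)
  (hsimple : IsSimpleCStar A) (hsc : StrictComparison W) (hΓ : GammaSurjective W)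
  {S : Set (QuasiTrace W)} {M η : ℝ≥0∞}
include SB hsimple hsc hΓ

theorem exists_orthogonal_mem_her (hM : M ≠ ∞) (hc : 0 ≤ c) (hcM : ∀ τ ∈ S, dTau τ c ≤ M)
    {t : ℝ} (ht : 0 < t) (hη : η ≠ 0) :
    ∃ P ∈ her c, ∃ c' ∈ her c, ∃ r > 0, 0 ≤ P ∧ 0 ≤ c' ∧ P * c' = 0 ∧
      (∀ τ ∈ S, dTau τ c' ≤ M) ∧
      (∀ τ ∈ S, dTau τ (cut t c) ≤ dTau τ P + 3 * η) ∧
      (∀ τ ∈ S, dTau τ P ≤ dTau τ (cut r P) + η) ∧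
      ExhaustedUpTo S (fun τ => dTau τ P + η) c c' := by
  obtain ⟨L, hL⟩ := SB.exists_isOrthogonalIsometryFamily
  obtain ⟨p, hpc, hp, r, hr, hpr⟩ :=
    exists_mem_her_dTau_le_dTau_cut_add SB hsimple hsc hΓ hM hc hcM ht hη
  have hr' : 0 < r / 2 := half_pos hr
  have h_tail (τ : QuasiTrace W) (hτ : τ ∈ S) := dTau_le_dTau_cut_half_add hp hr (hpr τ hτ).2
  set P := cut (r / 2) p
  set f := fEps (r / 2) p
  have hf : 0 ≤ f := fEps_nonneg _ hp
  have hff : f * f ≤ f := fEps_mul_fEps_le _ hp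
  have hfc : f ∈ her c := her_subset_her hpc (fEps_mem_her _ hp)
  have hPc : P ∈ her c := her_subset_her hpc (cfcₙ_mem_her hp (hf0 := by simpa using hr'.le))
  refine ⟨P, hPc, remainder c f, remainder_mem_her hc (.of_nonneg hf) hfc, r / 2, hr',
    cut_nonneg _ hp, remainder_nonneg c f,
    mul_remainder_eq_zero (.of_nonneg hf) (cut_mul_fEps hr' hp),
    fun τ hτ => (dTau_remainder_le τ hc hf hff).trans (hcM τ hτ), fun τ hτ => ?_,
    fun τ hτ => (h_tail τ hτ).2,
    (hL.exhaustedUpTo_remainder S hc hf hff).mono fun τ hτ =>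
      (dTau_cfcₙ_le τ hp).trans (h_tail τ hτ).1⟩
  calc dTau τ (cut t c) ≤ dTau τ p + 2 * η := (hpr τ hτ).1
    _ ≤ (dTau τ P + η) + 2 * η := by grw [(h_tail τ hτ).1]
    _ = dTau τ P + 3 * η := by ring

end ExhaustionStep

section Exhaustion

variable {S : Set (QuasiTrace W)} {η : ℕ → ℝ≥0∞} {M : ℝ≥0∞} {e : W}

/-- A sequence of mutually orthogonal positive elements `P k` for which cutting down by `r k` costs
at most `η k` in dimension, uniformly over `S`. -/
structure IsOrthogonalTailSequence (S : Set (QuasiTrace W)) (η : ℕ → ℝ≥0∞) (P : ℕ → W)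
    (r : ℕ → ℝ) : Prop where
  nonneg : ∀ k, 0 ≤ P k
  mul_eq_zero : Pairwise fun i j => P i * P j = 0
  pos : ∀ k, 0 < r k
  dTau_le : ∀ k, ∀ τ ∈ S, dTau τ (P k) ≤ dTau τ (cut (r k) (P k)) + η k

/-- A stage in the exhaustion of `e` by orthogonal elements: what is still to be exhausted, and the
dimension that has been accounted for. -/
structure ExhaustionStage (S : Set (QuasiTrace W)) (M : ℝ≥0∞) (e : W) where
  rest : W
  spent : QuasiTrace W → ℝ≥0∞
  nonneg : 0 ≤ rest
  mem_her : rest ∈ her e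
  dTau_le : ∀ τ ∈ S, dTau τ rest ≤ M
  exhausted : ExhaustedUpTo S spent e rest

variable {A : Type*} [NonUnitalCStarAlgebra A] (SB : Stabilization A W)
  (hsimple : IsSimpleCStar A) (hsc : StrictComparison W) (hΓ : GammaSurjective W)
include SB hsimple hsc hΓ

lemma ExhaustionStage.exists_next (hM : M ≠ ∞) (X : ExhaustionStage S M e) {t : ℝ} (ht : 0 < t)
    {η : ℝ≥0∞} (hη : η ≠ 0) :
    ∃ (Y : ExhaustionStage S M e) (P : W) (r : ℝ), Y.rest ∈ her X.rest ∧
      Y.spent = X.spent + (fun τ => dTau τ P + η) ∧ P ∈ her X.rest ∧ 0 ≤ P ∧ P * Y.rest = 0 ∧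
      0 < r ∧ (∀ τ ∈ S, dTau τ P ≤ dTau τ (cut r P) + η) ∧
      ∀ τ ∈ S, dTau τ (cut t e) ≤ X.spent τ + (dTau τ P + 3 * η) := by
  obtain ⟨s, hs, h_cut⟩ := X.exhausted t ht
  obtain ⟨P, hP, c, hc, r, hr, hP_nonneg, hc_nonneg, hPc, hcM, hP_cut, hP_tail, h_exh⟩ :=
    exists_orthogonal_mem_her SB hsimple hsc hΓ hM X.nonneg X.dTau_le hs hη
  refine ⟨⟨c, _, hc_nonneg, her_subset_her X.mem_her hc, hcM, X.exhausted.trans h_exh⟩, P, r, hc,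
    rfl, hP, hP_nonneg, hPc, hr, hP_tail, fun τ hτ => (h_cut τ hτ).trans ?_⟩
  grw [hP_cut τ hτ]

lemma exists_isOrthogonalTailSequence_dTau_cut_le (hM : M ≠ ∞) (he : 0 ≤ e)
    (heM : ∀ τ ∈ S, dTau τ e ≤ M) (hη : ∀ k, η k ≠ 0) :
    ∃ (P : ℕ → W) (r : ℕ → ℝ), IsOrthogonalTailSequence S η P r ∧ (∀ k, P k ∈ her e) ∧
      ∀ τ ∈ S, ∀ n : ℕ, dTau τ (cut (1 / ((n : ℝ) + 1)) e) ≤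
        ∑ k ∈ Finset.range n, (dTau τ (P k) + η k) + (dTau τ (P n) + 3 * η n) := by
  choose next P r h_rest h_spent h_mem h_nonneg h_mul h_pos h_tail h_cut using
    fun (n : ℕ) (X : ExhaustionStage S M e) => X.exists_next SB hsimple hsc hΓ hM
      (t := 1 / ((n : ℝ) + 1)) (by positivity) (hη n)
  let X (n : ℕ) : ExhaustionStage S M e :=
    n.rec ⟨e, 0, he, self_mem_her he, heM, .refl S e⟩ next
  have h_anti : Antitone fun n => her (X n).rest :=
    antitone_nat_of_succ_le fun n => her_subset_her (h_rest n (X n))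
  have h_lt {i j : ℕ} (hij : i < j) : P i (X i) * P j (X j) = 0 :=
    mul_eq_zero_of_mem_her (h_mul i (X i)) (h_anti hij (h_mem j (X j)))
  have h_sum (τ : QuasiTrace W) (n : ℕ) :
      (X n).spent τ = ∑ k ∈ Finset.range n, (dTau τ (P k (X k)) + η k) := by
    induction n with
    | zero => rfl
    | succ n ih =>
      rw [Finset.sum_range_succ, ← ih]
      exact congrFun (h_spent n (X n)) τ
  refine ⟨fun n => P n (X n), fun n => r n (X n), ⟨fun n => h_nonneg n (X n), fun i j hij => ?_,
    fun n => h_pos n (X n), fun n => h_tail n (X n)⟩,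
    fun n => her_subset_her (X n).mem_her (h_mem n (X n)), fun τ hτ n => ?_⟩
  · rcases hij.lt_or_gt with h | h
    · exact h_lt h
    · exact mul_eq_zero_symm (.of_nonneg (h_nonneg j (X j)))
        (.of_nonneg (h_nonneg i (X i))) (h_lt h)
  · exact (h_cut n (X n) τ hτ).trans_eq (by rw [h_sum])

theorem exists_isOrthogonalTailSequence (hM : M ≠ ∞) (he : 0 ≤ e)
    (heM : ∀ τ ∈ S, dTau τ e ≤ M) (hη : ∀ k, η k ≠ 0) :
    ∃ (P : ℕ → W) (r : ℕ → ℝ), IsOrthogonalTailSequence S η P r ∧ (∀ k, P k ∈ her e) ∧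
      ∀ τ ∈ S, dTau τ e ≤ ∑' k, dTau τ (P k) + 3 * ∑' k, η k := by
  obtain ⟨P, r, hP, hPe, h_cut⟩ :=
    exists_isOrthogonalTailSequence_dTau_cut_le SB hsimple hsc hΓ hM he heM hη
  refine ⟨P, r, hP, hPe, fun τ hτ => dTau_le_of_forall_cut_le τ he fun n => ?_⟩
  calc dTau τ (cut (1 / ((n : ℝ) + 1)) e)
      ≤ ∑ k ∈ Finset.range n, (dTau τ (P k) + η k) + (dTau τ (P n) + 3 * η n) := h_cut τ hτ n
    _ = ∑ k ∈ Finset.range (n + 1), dTau τ (P k) +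
        (∑ k ∈ Finset.range (n + 1), η k + 2 * η n) := by
      rw [Finset.sum_add_distrib, Finset.sum_range_succ, Finset.sum_range_succ]
      ring
    _ ≤ ∑' k, dTau τ (P k) + (∑' k, η k + 2 * ∑' k, η k) := by
      gcongr <;> first | exact ENNReal.sum_le_tsum _ | exact ENNReal.le_tsum n
    _ = ∑' k, dTau τ (P k) + 3 * ∑' k, η k := by ring

end Exhaustion

/-! ### Flattened orthogonal sums -/

section OrthogonalSums

variable (τ : QuasiTrace W) {v : ℕ → W} {a : W} {δ : ℝ}

lemma sum_mul_tsum_add_eq_zero {B : Type*} [NonUnitalNormedRing B] {v : ℕ → B} (hv : Summable v)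
    (h : Pairwise fun i j => v i * v j = 0) (n : ℕ) :
    (∑ k ∈ Finset.range n, v k) * ∑' k, v (k + n) = 0 := by
  rw [← ((summable_nat_add_iff n).mpr hv).tsum_mul_left, ← tsum_zero (α := B) (β := ℕ)]
  refine tsum_congr fun k => ?_
  rw [Finset.sum_mul]
  refine Finset.sum_eq_zero fun i hi => h ?_
  have := Finset.mem_range.mp hi
  lia

lemma fEps_eq_zero_of_norm_le (ha : 0 ≤ a) (hδ : 0 < δ) (h : ‖a‖ ≤ δ / 2) : fEps δ a = 0 := by
  rw [fEps, ← cfcₙ_const_zero ℝ a]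
  exact cfcₙ_congr fun x hx =>
    cutoff_of_le_half hδ ((le_norm_of_mem_quasispectrum ha hx).trans h)

lemma fEps_tsum (hv : Summable v) (hv_nonneg : ∀ k, 0 ≤ v k)
    (h : Pairwise fun i j => v i * v j = 0) (hδ : 0 < δ) {n : ℕ}
    (hn : ‖∑' k, v (k + n)‖ ≤ δ / 2) :
    fEps δ (∑' k, v k) = ∑ k ∈ Finset.range n, fEps δ (v k) := by
  have h_head : 0 ≤ ∑ k ∈ Finset.range n, v k := Finset.sum_nonneg fun k _ => hv_nonneg k
  have h_tail : 0 ≤ ∑' k, v (k + n) := tsum_nonneg fun k => hv_nonneg _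
  rw [← hv.sum_add_tsum_nat_add n, fEps, cfcₙ_add_of_mul_eq_zero (.of_nonneg h_head)
    (.of_nonneg h_tail) (sum_mul_tsum_add_eq_zero hv h n)]
  rw [← fEps, ← fEps, fEps_eq_zero_of_norm_le h_tail hδ hn, add_zero]
  exact cfcₙ_sum_of_pairwise_mul_eq_zero (fun k _ => .of_nonneg (hv_nonneg k)) (h.set_pairwise _)

lemma tsum_mem_her {B : Type*} [NonUnitalCStarAlgebra B] {v : ℕ → B} {e : B}
    (h : ∀ k, v k ∈ her e) : ∑' k, v k ∈ her e :=
  mem_herAddSubgroup.mp <|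
    tsum_mem (AddSubgroup.isClosed_topologicalClosure _) fun k => mem_herAddSubgroup.mpr (h k)

lemma dTau_sum_of_pairwise_mul_eq_zero {ι : Type*} {s : Finset ι} {a : ι → W} (ha : ∀ i, 0 ≤ a i)
    (h : Pairwise fun i j => a i * a j = 0) : dTau τ (∑ i ∈ s, a i) = ∑ i ∈ s, dTau τ (a i) := by
  simpa only [cut_zero (ha _), cut_zero (Finset.sum_nonneg fun i _ => ha i)] using
    dTau_cut_sum_of_pairwise_mul_eq_zero τ le_rfl ha (h.set_pairwise (s : Set ι))

lemma QuasiTrace.toFun_sum_of_pairwise_mul_eq_zero {ι : Type*} {s : Finset ι} {a : ι → W}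
    (ha : ∀ i, 0 ≤ a i) (h : Pairwise fun i j => a i * a j = 0) :
    τ.toFun (∑ i ∈ s, a i) = ∑ i ∈ s, τ.toFun (a i) := by
  classical
  induction s using Finset.induction_on with
  | empty => simp [τ.map_zero]
  | insert i s hi ih =>
    have h_mul : a i * ∑ j ∈ s, a j = 0 := by
      rw [Finset.mul_sum]
      exact Finset.sum_eq_zero fun j hj => h (ne_of_mem_of_not_mem hj hi).symm
    rw [Finset.sum_insert hi, Finset.sum_insert hi,
      τ.toFun_add_of_mul_eq_zero (ha i) (Finset.sum_nonneg fun j _ => ha j) h_mul, ih]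

lemma tsum_dTau_le_dTau_tsum (hv : Summable v) (hv_nonneg : ∀ k, 0 ≤ v k)
    (h : Pairwise fun i j => v i * v j = 0) : ∑' k, dTau τ (v k) ≤ dTau τ (∑' k, v k) := by
  refine ENNReal.tsum_le_of_sum_range_le fun n => ?_
  rw [← dTau_sum_of_pairwise_mul_eq_zero τ hv_nonneg h]
  exact dTau_mono τ (Finset.sum_nonneg fun k _ => hv_nonneg k)
    (hv.sum_le_tsum _ fun k _ => hv_nonneg k)

lemma QuasiTrace.iSup_toFun_fEps_eq_dTau (ha : 0 ≤ a) {δ : ℕ → ℝ} (hδ : ∀ n, 0 < δ n)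
    (hδ_lim : Tendsto δ atTop (𝓝 0)) : ⨆ n, τ.toFun (fEps (δ n) a) = dTau τ a := by
  refine le_antisymm (iSup_le fun n => τ.toFun_fEps_le_dTau ha (hδ n)) (iSup_le fun m => ?_)
  obtain ⟨n, hn⟩ := (hδ_lim.eventually_lt_const (by positivity : (0 : ℝ) < 1 / (m + 1))).exists
  exact le_iSup_of_le n (τ.toFun_fEps_antitone ha (hδ n) hn.le)

end OrthogonalSums

section Flatten

/-- The profile that rises linearly from `0` to `l` on `[0, r]` and equals `l` beyond `r`. -/
def plateau (l r x : ℝ) : ℝ := l * min 1 (max 0 (x / r))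

variable {l r x : ℝ}

@[fun_prop]
lemma continuous_plateau (l r : ℝ) : Continuous (plateau l r) := by unfold plateau; fun_prop

@[simp]
lemma plateau_zero (l r : ℝ) : plateau l r 0 = 0 := by simp [plateau]

lemma monotone_plateau (hl : 0 ≤ l) (hr : 0 ≤ r) : Monotone (plateau l r) := fun x y h => by
  unfold plateau
  gcongr

lemma plateau_pos (hl : 0 < l) (hr : 0 < r) (hx : 0 < x) : 0 < plateau l r x :=
  mul_pos hl (lt_min one_pos (lt_max_of_lt_right (div_pos hx hr)))

lemma plateau_of_le (hr : 0 < r) (h : r ≤ x) : plateau l r x = l := by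
  rw [plateau, min_eq_left (le_max_of_le_right ((one_le_div hr).mpr h)), mul_one]

lemma abs_plateau_le (hl : 0 ≤ l) (r x : ℝ) : |plateau l r x| ≤ l := by
  have h_nonneg : 0 ≤ min 1 (max 0 (x / r)) := le_min zero_le_one (le_max_left _ _)
  rw [plateau, abs_of_nonneg (mul_nonneg hl h_nonneg)]
  exact mul_le_of_le_one_right hl (min_le_left _ _)

/-- The orthogonal elements `P k` levelled off at height `4⁻ᵏ⁻¹` above the threshold `r k`; the
heights make the family summable, with tails below a third of the last height retained. -/
def flatten (P : ℕ → W) (r : ℕ → ℝ) (k : ℕ) : W :=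
  cfcₙ (plateau ((1 / 4) ^ (k + 1)) (r k)) (P k)

namespace IsOrthogonalTailSequence

variable {S : Set (QuasiTrace W)} {η : ℕ → ℝ≥0∞} {P : ℕ → W} {r : ℕ → ℝ}
  (h : IsOrthogonalTailSequence S η P r)
include h

lemma flatten_nonneg (k : ℕ) : 0 ≤ flatten P r k :=
  cfcₙ_nonneg_of_nonneg (h.nonneg k) fun _ hx =>
    (plateau_zero _ _).ge.trans (monotone_plateau (by positivity) (h.pos k).le hx)

lemma flatten_mem_her (k : ℕ) : flatten P r k ∈ her (P k) := cfcₙ_mem_her (h.nonneg k)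

lemma flatten_mul_eq_zero : Pairwise fun i j => flatten P r i * flatten P r j = 0 :=
  fun i j hij => cfcₙ_mul_cfcₙ_eq_zero (.of_nonneg (h.nonneg i)) (.of_nonneg (h.nonneg j))
    (h.mul_eq_zero hij)

lemma norm_flatten_le (k : ℕ) : ‖flatten P r k‖ ≤ (1 / 4) ^ (k + 1) :=
  norm_cfcₙ_le_of_nonneg (h.nonneg k) fun x _ => abs_plateau_le (by positivity) _ x

lemma summable_flatten : Summable (flatten P r) :=
  .of_norm_bounded ((summable_nat_add_iff 1).mpr (summable_geometric_of_lt_one (by norm_num)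
    (by norm_num))) h.norm_flatten_le

lemma norm_tsum_flatten_le (n : ℕ) : ‖∑' k, flatten P r (k + n)‖ ≤ (1 / 4) ^ n / 3 := by
  have h_geom : HasSum (fun k : ℕ => (1 / 4 : ℝ) ^ k * (1 / 4) ^ (n + 1)) ((1 / 4) ^ n / 3) := by
    have h_sum : (1 / 4 : ℝ) ^ n / 3 = (1 - 1 / 4)⁻¹ * (1 / 4) ^ (n + 1) := by ring
    exact h_sum ▸ (hasSum_geometric_of_lt_one (by norm_num) (by norm_num)).mul_right _
  refine tsum_of_norm_bounded h_geom fun k => (h.norm_flatten_le _).trans_eq ?_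
  ring

lemma norm_tsum_flatten_le_one : ‖∑' k, flatten P r k‖ ≤ 1 :=
  (h.norm_tsum_flatten_le 0).trans (by norm_num)

lemma dTau_le_dTau_flatten (τ : QuasiTrace W) (k : ℕ) : dTau τ (P k) ≤ dTau τ (flatten P r k) :=
  dTau_le_dTau_cfcₙ τ (h.nonneg k) (monotone_plateau (by positivity) (h.pos k).le)
    fun _ hx => plateau_pos (by positivity) (h.pos k) hx

lemma tsum_dTau_le_dTau_tsum_flatten (τ : QuasiTrace W) :
    ∑' k, dTau τ (P k) ≤ dTau τ (∑' k, flatten P r k) :=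
  (ENNReal.tsum_le_tsum (h.dTau_le_dTau_flatten τ)).trans <|
    tsum_dTau_le_dTau_tsum τ h.summable_flatten h.flatten_nonneg h.flatten_mul_eq_zero

lemma dTau_fEps_flatten_le {τ : QuasiTrace W} (hτ : τ ∈ S) {m : ℝ} (hm : 0 < m) {k : ℕ}
    (hmk : m ≤ (1 / 4) ^ (k + 1)) :
    dTau τ (fEps m (flatten P r k)) ≤ τ.toFun (fEps 1 (fEps m (flatten P r k))) + η k := by
  have h_plateau (x : ℝ) (hx : r k ≤ x) :
      1 ≤ cutoff 1 (cutoff m (plateau ((1 / 4) ^ (k + 1)) (r k) x)) := by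
    rw [plateau_of_le (h.pos k) hx, cutoff_of_le hm hmk, cutoff_of_le one_pos le_rfl]
  calc dTau τ (fEps m (flatten P r k))
      ≤ dTau τ (flatten P r k) := dTau_cfcₙ_le τ (h.flatten_nonneg k)
    _ ≤ dTau τ (P k) := dTau_cfcₙ_le τ (h.nonneg k)
    _ ≤ dTau τ (cut (r k) (P k)) + η k := h.dTau_le k τ hτ
    _ ≤ τ.toFun (fEps 1 (fEps m (flatten P r k))) + η k := by
      gcongr
      rw [fEps, fEps, cfcₙ_cfcₙ (h.flatten_nonneg k) fun _ _ => rfl, flatten,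
        cfcₙ_cfcₙ (h.nonneg k) fun _ _ => rfl]
      exact dTau_cut_le_toFun_cfcₙ τ (h.nonneg k) (h.pos k).le (fun x _ => cutoff_nonneg _ _)
        h_plateau

lemma fEps_tsum_flatten (n : ℕ) :
    fEps ((1 / 4) ^ (n + 1)) (∑' k, flatten P r k) =
      ∑ k ∈ Finset.range (n + 1), fEps ((1 / 4) ^ (n + 1)) (flatten P r k) := by
  refine fEps_tsum h.summable_flatten h.flatten_nonneg h.flatten_mul_eq_zero (by positivity)
    ((h.norm_tsum_flatten_le _).trans ?_)
  gcongr
  norm_num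

lemma omegaOn_fEps_tsum_flatten_le (n : ℕ) :
    omegaOn S (fEps ((1 / 4) ^ (n + 1)) (∑' k, flatten P r k)) ≤ ∑' k, η k := by
  set w : ℕ → W := fun k => fEps ((1 / 4) ^ (n + 1)) (flatten P r k)
  have hw_nonneg (k : ℕ) : 0 ≤ w k := fEps_nonneg _ (h.flatten_nonneg k)
  have hw_sa (k : ℕ) : IsSelfAdjoint (w k) := .of_nonneg (hw_nonneg k)
  have hw_mul : Pairwise fun i j => w i * w j = 0 := fun i j hij =>
    cfcₙ_mul_cfcₙ_eq_zero (.of_nonneg (h.flatten_nonneg i)) (.of_nonneg (h.flatten_nonneg j))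
      (h.flatten_mul_eq_zero hij)
  have h_fEps : fEps 1 (∑ k ∈ Finset.range (n + 1), w k) =
      ∑ k ∈ Finset.range (n + 1), fEps 1 (w k) :=
    cfcₙ_sum_of_pairwise_mul_eq_zero (fun k _ => hw_sa k) (hw_mul.set_pairwise _)
  refine (iInf_le _ 0).trans (iSup₂_le fun τ hτ => tsub_le_iff_right.mpr ?_)
  rw [h.fEps_tsum_flatten, Nat.cast_zero, zero_add, div_one, h_fEps,
    dTau_sum_of_pairwise_mul_eq_zero τ hw_nonneg hw_mul,
    τ.toFun_sum_of_pairwise_mul_eq_zero (fun k => fEps_nonneg 1 (hw_nonneg k))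
      fun i j hij => cfcₙ_mul_cfcₙ_eq_zero (hw_sa i) (hw_sa j) (hw_mul hij)]
  calc ∑ k ∈ Finset.range (n + 1), dTau τ (w k)
      ≤ ∑ k ∈ Finset.range (n + 1), (τ.toFun (fEps 1 (w k)) + η k) := by
        refine Finset.sum_le_sum fun k hk => h.dTau_fEps_flatten_le hτ (by positivity) ?_
        exact pow_le_pow_of_le_one (by norm_num) (by norm_num) (Finset.mem_range.mp hk)
    _ = ∑ k ∈ Finset.range (n + 1), η k + ∑ k ∈ Finset.range (n + 1), τ.toFun (fEps 1 (w k)) := by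
        rw [Finset.sum_add_distrib, add_comm]
    _ ≤ ∑' k, η k + ∑ k ∈ Finset.range (n + 1), τ.toFun (fEps 1 (w k)) := by
        gcongr
        exact ENNReal.sum_le_tsum _

end IsOrthogonalTailSequence

end Flatten

theorem exists_subelement_with_small_oscillation_approx_general
    (SB : Stabilization A W) (hsimple : IsSimpleCStar A)
    (hsc : StrictComparison W) (hΓ : GammaSurjective W)
    (e : W) (he : 0 ≤ e) (hePed : e ∈ pedersen W) (ε : ℝ) (hε : 0 < ε) :
    ∃ e₀ : W, e₀ ∈ her e ∧ 0 ≤ e₀ ∧ ‖e₀‖ ≤ 1 ∧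
      (∀ τ ∈ closure (QTSet SB), dTau τ e < dTau τ e₀ + ENNReal.ofReal ε) ∧
      ∃ es : ℕ → W,
        (∀ n, es n ∈ her e₀ ∧ 0 ≤ es n ∧ ‖es n‖ ≤ 1) ∧
        (∀ n, es n ≤ es (n + 1)) ∧
        (∀ τ ∈ closure (QTSet SB), (⨆ n : ℕ, τ.toFun (es n)) = dTau τ e₀) ∧
        ∀ n, omegaOn (closure (QTSet SB)) (es n) < ENNReal.ofReal ε := by
  obtain ⟨M, hM, heM⟩ := SB.exists_forall_dTau_le_of_mem_pedersen hsimple he hePed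
  obtain ⟨η, hη_pos, hη⟩ := ENNReal.exists_pos_sum_of_countable' (ε := ENNReal.ofReal ε / 3)
    (ENNReal.div_ne_zero.mpr ⟨by simpa using hε, by simp⟩) ℕ
  have h3η : 3 * ∑' k, η k < ENNReal.ofReal ε := by
    rwa [mul_comm, ← ENNReal.lt_div_iff_mul_lt (by simp) (by simp)]
  obtain ⟨P, r, hP, hPe, h_exh⟩ :=
    exists_isOrthogonalTailSequence SB hsimple hsc hΓ hM he heM fun k => (hη_pos k).ne'
  have he₀ : 0 ≤ ∑' k, flatten P r k := tsum_nonneg hP.flatten_nonneg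
  have he₀e := tsum_mem_her fun k => her_subset_her (hPe k) (hP.flatten_mem_her k)
  refine ⟨∑' k, flatten P r k, he₀e, he₀, hP.norm_tsum_flatten_le_one, fun τ hτ => ?_,
    fun n => fEps ((1 / 4) ^ (n + 1)) (∑' k, flatten P r k),
    fun n => ⟨fEps_mem_her _ he₀, fEps_nonneg _ he₀, norm_fEps_le_one _ he₀⟩,
    fun n => fEps_le_fEps he₀ (by positivity) ?_,
    fun τ _ => τ.iSup_toFun_fEps_eq_dTau he₀ (fun n => by positivity) ?_,
    fun n => (hP.omegaOn_fEps_tsum_flatten_le n).trans_lt <|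
      (le_mul_of_one_le_left' (by norm_num)).trans_lt h3η⟩
  · by_cases h_top : dTau τ (∑' k, flatten P r k) = ∞
    · simpa only [h_top, top_add] using (heM τ hτ).trans_lt hM.lt_top
    · calc dTau τ e ≤ dTau τ (∑' k, flatten P r k) + 3 * ∑' k, η k := by
            grw [h_exh τ hτ, hP.tsum_dTau_le_dTau_tsum_flatten τ]
        _ < dTau τ (∑' k, flatten P r k) + ENNReal.ofReal ε := ENNReal.add_lt_add_left h_top h3η
  · exact pow_le_pow_of_le_one (by norm_num) (by norm_num) n.succ.le_succ
  · exact (tendsto_pow_atTop_nhds_zero_of_lt_one (by norm_num) (by norm_num)).comp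
      (tendsto_add_atTop_nat 1)

/-- **Lemma.** Let `A` be a σ-unital algebraically simple C*-algebra with strict comparison and
surjective `Γ`, not purely infinite, and let `e ∈ Ped(A ⊗ K)₊` be a nonzero contraction.
For every `ε > 0` there is a positive contraction `e₀ ∈ Her(e)` with:
(1) `d_τ(e) - d_τ(e₀) < ε` on `\overline{QT(A)}^w`; and (2) an increasing sequence of positive
contractions `e_{0,n} ∈ Her(e₀)` with `τ(e_{0,n}) ↗ d_τ(e₀)` for every
`τ ∈ \overline{QT(A)}^w` and `ω(e_{0,n}) < ε` for all `n`. -/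
theorem exists_subelement_with_small_oscillation_approx
    (SB : Stabilization A W)
    (hσ : SigmaUnital A) (hsimple : IsSimpleCStar A) (halg : pedersen A = Set.univ)
    (hsc : StrictComparison W) (hΓ : GammaSurjective W) (hnpi : ¬ PurelyInfinite A)
    (e : W) (he : 0 ≤ e) (he0 : e ≠ 0) (hePed : e ∈ pedersen W) (hecontr : ‖e‖ ≤ 1)
    (ε : ℝ) (hε : 0 < ε) :
    ∃ e₀ : W, e₀ ∈ her e ∧ 0 ≤ e₀ ∧ ‖e₀‖ ≤ 1 ∧
      (∀ τ ∈ closure (QTSet SB), dTau τ e < dTau τ e₀ + ENNReal.ofReal ε) ∧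
      ∃ es : ℕ → W,
        (∀ n, es n ∈ her e₀ ∧ 0 ≤ es n ∧ ‖es n‖ ≤ 1) ∧
        (∀ n, es n ≤ es (n + 1)) ∧
        (∀ τ ∈ closure (QTSet SB), (⨆ n : ℕ, τ.toFun (es n)) = dTau τ e₀) ∧
        ∀ n, omegaOn (closure (QTSet SB)) (es n) < ENNReal.ofReal ε :=
  exists_subelement_with_small_oscillation_approx_general SB hsimple hsc hΓ e he hePed ε hε

end Paper
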